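/- arXiv:2410.08004 — 2 statements merged into one kernel-verified Lean document; each statement's English description precedes it below -/
import Mathlib

section
/- Let 0 < β < 1 and h = 0, and fix 0 < δ < 1/6. Let ξ̃ be a real random variable with the Gaussian density of mean 0 and variance β/(1−β), and set ξ_N = ξ̃ 1{|ξ̃| ≤ N^δ}. Define ν_N(σ) = 2^{−N} E[∏_{i=1}^N (1 + σ_i ξ_N/√N)] for σ ∈ {−1,+1}^N. Then H(μ_N | ν_N) → 0 and H(ν_N | μ_N) → 0 as N → ∞. -/
open Filter Real MeasureTheory

/-- Relative entropy (Kullback–Leibler divergence) between two probability mass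
functions on a finite set. -/
noncomputable def relEnt {α : Type*} [Fintype α] (rho pion : α → ℝ) : ℝ :=
  ∑ x, rho x * Real.log (rho x / pion x)

/-!
With `m = N^{-1/2} ∑ σ_i`, a Taylor expansion gives `∏ (1 + σ_i x / √N) ≈ exp (m x - x² / 2)`, with
a relative error `O(|x|³ / √N)`. Averaging the right-hand side over a Gaussian `x` of variance
`v = β / (1 - β)` yields exactly `√(1 - β) exp (β m² / 2)`, a multiple of the Curie–Weiss weight.
Truncating `x` at level `T` multiplies this average by at most `exp (O(T⁻²))` and, by Chebyshev's
inequality under the Gaussian tilted by `m`, at least `exp (-O((1 + m²)² / T²))`. The latter error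
is integrable because the fourth moment of `m` under the Curie–Weiss measure is bounded: the
partition function remains of order `2^N` when `v` is replaced by `v + 1`.
-/

namespace CurieWeiss

open ProbabilityTheory
open scoped NNReal

section RelativeEntropy

variable {α : Type*} [Fintype α]

/-- The probability mass function proportional to the positive weights `a`. -/
noncomputable def normalizeSum (a : α → ℝ) (x : α) : ℝ := a x / ∑ y, a y

lemma normalizeSum_const_mul {c : ℝ} (hc : c ≠ 0) (a : α → ℝ) :
    normalizeSum (fun x => c * a x) = normalizeSum a := by
  funext x
  rw [normalizeSum, ← Finset.mul_sum, mul_div_mul_left _ _ hc, normalizeSum]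

lemma sum_normalizeSum {a : α → ℝ} (ha : ∑ x, a x ≠ 0) : ∑ x, normalizeSum a x = 1 := by
  simp only [normalizeSum]
  rw [← Finset.sum_div, div_self ha]

lemma relEnt_nonneg {p q : α → ℝ} (hp : ∀ x, 0 < p x) (hq : ∀ x, 0 < q x)
    (h : ∑ x, q x ≤ ∑ x, p x) : 0 ≤ relEnt p q := by
  have hterm (x : α) : p x - q x ≤ p x * log (p x / q x) :=
    calc p x - q x = p x * (1 - (p x / q x)⁻¹) := by
          have := (hp x).ne'
          field_simp
      _ ≤ p x * log (p x / q x) := by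
          gcongr
          · exact (hp x).le
          · exact one_sub_inv_le_log_of_pos (div_pos (hp x) (hq x))
  calc 0 ≤ ∑ x, (p x - q x) := by rwa [Finset.sum_sub_distrib, sub_nonneg]
    _ ≤ relEnt p q := Finset.sum_le_sum fun x _ => hterm x

variable [Nonempty α] {a b : α → ℝ}

lemma sum_pos_of_pos (ha : ∀ x, 0 < a x) : 0 < ∑ x, a x :=
  Finset.sum_pos (fun x _ => ha x) Finset.univ_nonempty

lemma normalizeSum_pos (ha : ∀ x, 0 < a x) (x : α) : 0 < normalizeSum a x :=
  div_pos (ha x) (sum_pos_of_pos ha)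

lemma relEnt_normalizeSum_nonneg (ha : ∀ x, 0 < a x) (hb : ∀ x, 0 < b x) :
    0 ≤ relEnt (normalizeSum a) (normalizeSum b) :=
  relEnt_nonneg (normalizeSum_pos ha) (normalizeSum_pos hb) <| by
    rw [sum_normalizeSum (sum_pos_of_pos ha).ne', sum_normalizeSum (sum_pos_of_pos hb).ne']

lemma relEnt_normalizeSum_le (ha : ∀ x, 0 < a x) (hb : ∀ x, 0 < b x) {f : α → ℝ} {c : ℝ}
    (hab : ∀ x, a x ≤ exp (f x) * b x) (hc : ∑ x, b x ≤ exp c * ∑ x, a x) :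
    relEnt (normalizeSum a) (normalizeSum b) ≤ ∑ x, normalizeSum a x * f x + c := by
  have hA := sum_pos_of_pos ha
  have hB := sum_pos_of_pos hb
  have hratio (x : α) : normalizeSum a x / normalizeSum b x ≤ exp (f x + c) :=
    calc normalizeSum a x / normalizeSum b x = a x / b x * ((∑ y, b y) / ∑ y, a y) := by
          simp only [normalizeSum]
          field_simp
      _ ≤ exp (f x) * exp c := by
          gcongr
          · exact (div_le_iff₀ (hb x)).2 (hab x)
          · exact (div_le_iff₀ hA).2 hc
      _ = exp (f x + c) := (exp_add _ _).symm
  calc relEnt (normalizeSum a) (normalizeSum b) ≤ ∑ x, normalizeSum a x * (f x + c) := by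
        refine Finset.sum_le_sum fun x _ => mul_le_mul_of_nonneg_left ?_ (normalizeSum_pos ha x).le
        have hpos := div_pos (normalizeSum_pos ha x) (normalizeSum_pos hb x)
        exact (log_le_iff_le_exp hpos).2 (hratio x)
    _ = ∑ x, normalizeSum a x * f x + c := by
        simp only [mul_add]
        rw [Finset.sum_add_distrib, ← Finset.sum_mul, sum_normalizeSum hA.ne', one_mul]

end RelativeEntropy

section GaussianShift

/-- The density at `m`, relative to the standard Gaussian, of the mixture over `x ∼ ρ` of the
Gaussians of mean `x` and variance `1`. -/
noncomputable def shiftDensity (ρ : Measure ℝ) (m : ℝ) : ℝ := ∫ x, exp (m * x - x ^ 2 / 2) ∂ρ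

lemma exp_shift_le (m x : ℝ) : exp (m * x - x ^ 2 / 2) ≤ exp (m ^ 2 / 2) :=
  exp_le_exp.2 (by nlinarith [sq_nonneg (m - x)])

lemma integrable_exp_shift (ρ : Measure ℝ) [IsFiniteMeasure ρ] (m : ℝ) :
    Integrable (fun x => exp (m * x - x ^ 2 / 2)) ρ :=
  .of_bound (by fun_prop) (exp (m ^ 2 / 2)) <| ae_of_all _ fun x => by
    simpa only [norm_of_nonneg (exp_pos _).le] using exp_shift_le m x

variable (ρ : Measure ℝ) [IsProbabilityMeasure ρ]

lemma shiftDensity_le (m : ℝ) : shiftDensity ρ m ≤ exp (m ^ 2 / 2) := by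
  simpa [shiftDensity] using
    integral_mono (integrable_exp_shift ρ m) (integrable_const _) (exp_shift_le m)

variable {ρ}

lemma exp_neg_le_shiftDensity (hρ : Integrable (fun x => x ^ 2) ρ) (m : ℝ) :
    exp (-(m ^ 2 / 2 + ∫ x, x ^ 2 ∂ρ)) ≤ shiftDensity ρ m := by
  have hcompare (x : ℝ) : exp (-(m ^ 2 / 2 + x ^ 2)) ≤ exp (m * x - x ^ 2 / 2) :=
    exp_le_exp.2 (by nlinarith [sq_nonneg (m + x)])
  have hexp : Integrable (fun x => exp (-(m ^ 2 / 2 + x ^ 2))) ρ :=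
    (integrable_exp_shift ρ m).mono' (by fun_prop) <| ae_of_all _ fun x => by
      simpa only [norm_of_nonneg (exp_pos _).le] using hcompare x
  calc exp (-(m ^ 2 / 2 + ∫ x, x ^ 2 ∂ρ)) = exp (∫ x, -(m ^ 2 / 2 + x ^ 2) ∂ρ) := by
        rw [integral_neg, integral_add (integrable_const _) hρ, integral_const]
        simp
    _ ≤ ∫ x, exp (-(m ^ 2 / 2 + x ^ 2)) ∂ρ :=
        convexOn_exp.map_integral_le continuous_exp.continuousOn isClosed_univ (by simp)
          ((integrable_const _).add hρ).neg hexp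
    _ ≤ shiftDensity ρ m := integral_mono hexp (integrable_exp_shift ρ m) hcompare

end GaussianShift

section Truncation

/-- The law of `ξ 1{|ξ| ≤ T}` when `ξ` has law `ρ`. -/
noncomputable def truncate (ρ : Measure ℝ) (T : ℝ) : Measure ℝ :=
  ρ.map ((Set.Icc (-T) T).indicator id)

lemma measurable_indicator_Icc_id (T : ℝ) : Measurable ((Set.Icc (-T) T).indicator (id : ℝ → ℝ)) :=
  measurable_id.indicator measurableSet_Icc

instance (ρ : Measure ℝ) [IsProbabilityMeasure ρ] (T : ℝ) : IsProbabilityMeasure (truncate ρ T) :=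
  Measure.isProbabilityMeasure_map (measurable_indicator_Icc_id T).aemeasurable

variable {ρ : Measure ℝ} {T : ℝ}

lemma integral_truncate {f : ℝ → ℝ} (hf : Measurable f) :
    ∫ x, f x ∂truncate ρ T = ∫ x, f ((Set.Icc (-T) T).indicator id x) ∂ρ :=
  integral_map (measurable_indicator_Icc_id T).aemeasurable hf.aestronglyMeasurable

lemma ae_truncate_abs_le (hT : 0 ≤ T) : ∀ᵐ x ∂truncate ρ T, |x| ≤ T := by
  rw [truncate, ae_map_iff (measurable_indicator_Icc_id T).aemeasurable
    (measurableSet_le (by fun_prop) (by fun_prop))]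
  refine ae_of_all _ fun x => ?_
  by_cases hx : x ∈ Set.Icc (-T) T
  · simpa only [Set.indicator_of_mem hx, id] using abs_le.2 hx
  · simpa only [Set.indicator_of_notMem hx, abs_zero] using hT

lemma indicator_id_sq_le (s : Set ℝ) (x : ℝ) : s.indicator id x ^ 2 ≤ x ^ 2 := by
  by_cases hx : x ∈ s <;> simp [hx, sq_nonneg]

lemma integrable_sq_truncate (hρ : Integrable (fun x => x ^ 2) ρ) :
    Integrable (fun x => x ^ 2) (truncate ρ T) := by
  have hm := measurable_indicator_Icc_id T
  refine (integrable_map_measure (by fun_prop) hm.aemeasurable).2 <|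
    hρ.mono' (hm.pow_const 2).aestronglyMeasurable <| ae_of_all _ fun x => ?_
  simpa [abs_of_nonneg] using indicator_id_sq_le (Set.Icc (-T) T) x

lemma integral_sq_truncate_le (hρ : Integrable (fun x => x ^ 2) ρ) :
    ∫ x, x ^ 2 ∂truncate ρ T ≤ ∫ x, x ^ 2 ∂ρ := by
  rw [integral_truncate (by fun_prop)]
  exact integral_mono_of_nonneg (ae_of_all _ fun _ => sq_nonneg _) hρ
    (ae_of_all _ (indicator_id_sq_le _))

lemma shiftDensity_truncate [IsFiniteMeasure ρ] (m : ℝ) :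
    shiftDensity (truncate ρ T) m =
      ∫ x in Set.Icc (-T) T, exp (m * x - x ^ 2 / 2) ∂ρ + ρ.real (Set.Icc (-T) T)ᶜ := by
  have hS : MeasurableSet (Set.Icc (-T) T) := measurableSet_Icc
  rw [shiftDensity, integral_truncate (by fun_prop), ← integral_add_compl hS]
  · congr 1
    · exact setIntegral_congr_fun hS fun x hx => by simp [hx]
    · rw [setIntegral_congr_fun (g := fun _ => (1 : ℝ)) hS.compl]
      · simp
      · intro x hx
        simp [Set.indicator_of_notMem hx]
  · exact (integrable_map_measure (by fun_prop) (measurable_indicator_Icc_id T).aemeasurable).1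
      (integrable_exp_shift (ρ.map _) m)

lemma measureReal_compl_Icc_le (hT : 0 < T) (hρ : Integrable (fun x => x ^ 2) ρ) :
    ρ.real (Set.Icc (-T) T)ᶜ ≤ (∫ x, x ^ 2 ∂ρ) / T ^ 2 := by
  have hsub : (Set.Icc (-T) T)ᶜ ⊆ {x | T ^ 2 ≤ x ^ 2} := fun x hx => by
    have hx : T < |x| := not_le.1 fun h => hx (abs_le.1 h)
    exact sq_le_sq.2 ((abs_of_pos hT).trans_le hx.le)
  rw [le_div_iff₀' (by positivity)]
  have hmarkov := mul_meas_ge_le_integral_of_nonneg (ae_of_all _ sq_nonneg) hρ (T ^ 2)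
  refine le_trans ?_ hmarkov
  gcongr
  exact (hρ.measure_ge_lt_top (by positivity)).ne

end Truncation

section GaussianTilt

variable (v : ℝ≥0) (m : ℝ)

lemma integrable_sq_gaussianReal (μ : ℝ) : Integrable (fun x => x ^ 2) (gaussianReal μ v) :=
  (memLp_id_gaussianReal 2).integrable_sq

lemma integral_sq_gaussianReal (μ : ℝ) : ∫ x, x ^ 2 ∂gaussianReal μ v = v + μ ^ 2 := by
  have h := variance_eq_sub (memLp_id_gaussianReal (μ := μ) (v := v) 2)
  simp only [variance_id_gaussianReal, id, Pi.pow_apply, integral_id_gaussianReal] at h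
  linarith

lemma exp_shift_mul_gaussianPDFReal (hv : v ≠ 0) (x : ℝ) :
    gaussianPDFReal 0 v x * exp (m * x - x ^ 2 / 2) =
      exp (v / (1 + v) * m ^ 2 / 2) / √(1 + v) *
        gaussianPDFReal (v / (1 + v) * m) (v / (1 + v)) x := by
  have : (0 : ℝ) < v := by exact_mod_cast pos_iff_ne_zero.2 hv
  have hsqrt : √(2 * π * (v / (1 + v))) = √(2 * π * v) / √(1 + v) := by
    rw [mul_div_assoc', sqrt_div (by positivity)]
  have hexp : -(x - 0) ^ 2 / (2 * v) + (m * x - x ^ 2 / 2) =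
      v / (1 + v) * m ^ 2 / 2 + -(x - v / (1 + v) * m) ^ 2 / (2 * (v / (1 + v))) := by
    field_simp
    ring
  simp only [gaussianPDFReal, NNReal.coe_div, NNReal.coe_add, NNReal.coe_one]
  rw [mul_assoc, ← exp_add, hexp, exp_add, hsqrt]
  field_simp

lemma integral_exp_shift_mul_gaussianReal (f : ℝ → ℝ) :
    ∫ x, exp (m * x - x ^ 2 / 2) * f x ∂gaussianReal 0 v =
      exp (v / (1 + v) * m ^ 2 / 2) / √(1 + v) *
        ∫ x, f x ∂gaussianReal (v / (1 + v) * m) (v / (1 + v)) := by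
  rcases eq_or_ne v 0 with rfl | hv
  · simp
  rw [integral_gaussianReal_eq_integral_smul hv,
    integral_gaussianReal_eq_integral_smul (by positivity), ← integral_const_mul]
  refine integral_congr_ae (ae_of_all _ fun x => ?_)
  simp only [smul_eq_mul]
  rw [← mul_assoc, exp_shift_mul_gaussianPDFReal v m hv, mul_assoc]

lemma shiftDensity_gaussianReal :
    shiftDensity (gaussianReal 0 v) m = exp (v / (1 + v) * m ^ 2 / 2) / √(1 + v) := by
  simpa [shiftDensity] using integral_exp_shift_mul_gaussianReal v m fun _ => 1

lemma setIntegral_exp_shift_gaussianReal {s : Set ℝ} (hs : MeasurableSet s) :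
    ∫ x in s, exp (m * x - x ^ 2 / 2) ∂gaussianReal 0 v =
      shiftDensity (gaussianReal 0 v) m *
        (gaussianReal (v / (1 + v) * m) (v / (1 + v))).real s := by
  rw [← integral_indicator hs, ← integral_indicator_one hs, shiftDensity_gaussianReal,
    ← integral_exp_shift_mul_gaussianReal]
  refine integral_congr_ae (ae_of_all _ fun x => ?_)
  by_cases hx : x ∈ s <;> simp [hx]

lemma one_le_shiftDensity_gaussianReal_mul :
    1 ≤ shiftDensity (gaussianReal 0 v) m * √(1 + v) := by
  have : √(1 + v : ℝ) ≠ 0 := by positivity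
  rw [shiftDensity_gaussianReal, div_mul_cancel₀ _ this]
  exact one_le_exp (by positivity)

variable {v m} {T : ℝ}

lemma shiftDensity_gaussianReal_pos : 0 < shiftDensity (gaussianReal 0 v) m := by
  rw [shiftDensity_gaussianReal]
  positivity

lemma shiftDensity_truncate_gaussianReal_le (hT : 0 < T) :
    shiftDensity (truncate (gaussianReal 0 v) T) m ≤
      exp (√(1 + v) * v / T ^ 2) * shiftDensity (gaussianReal 0 v) m := by
  have hintegral : ∫ x in Set.Icc (-T) T, exp (m * x - x ^ 2 / 2) ∂gaussianReal 0 v ≤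
      shiftDensity (gaussianReal 0 v) m :=
    setIntegral_le_integral (integrable_exp_shift _ m) (ae_of_all _ fun _ => (exp_pos _).le)
  have htail : (gaussianReal 0 v).real (Set.Icc (-T) T)ᶜ ≤ v / T ^ 2 := by
    simpa [integral_sq_gaussianReal] using
      measureReal_compl_Icc_le hT (integrable_sq_gaussianReal v 0)
  calc shiftDensity (truncate (gaussianReal 0 v) T) m
      ≤ shiftDensity (gaussianReal 0 v) m + 1 * (v / T ^ 2) := by
        rw [shiftDensity_truncate, one_mul]
        gcongr
    _ ≤ shiftDensity (gaussianReal 0 v) m +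
          shiftDensity (gaussianReal 0 v) m * √(1 + v) * (v / T ^ 2) := by
        gcongr
        exact one_le_shiftDensity_gaussianReal_mul v m
    _ = (√(1 + v) * v / T ^ 2 + 1) * shiftDensity (gaussianReal 0 v) m := by ring
    _ ≤ exp (√(1 + v) * v / T ^ 2) * shiftDensity (gaussianReal 0 v) m :=
        mul_le_mul_of_nonneg_right (add_one_le_exp _) shiftDensity_gaussianReal_pos.le

lemma le_shiftDensity_truncate_gaussianReal (hT : 0 < T) :
    shiftDensity (gaussianReal 0 v) m * (1 - (1 + m ^ 2) / T ^ 2) ≤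
      shiftDensity (truncate (gaussianReal 0 v) T) m := by
  set w : ℝ≥0 := v / (1 + v) with hw
  have hw1 : (w : ℝ) ≤ 1 := by
    rw [hw, NNReal.coe_div, NNReal.coe_add, NNReal.coe_one]
    exact div_le_one_of_le₀ (by linarith) (by positivity)
  have htail : (gaussianReal (w * m) w).real (Set.Icc (-T) T)ᶜ ≤ (1 + m ^ 2) / T ^ 2 :=
    calc (gaussianReal (w * m) w).real (Set.Icc (-T) T)ᶜ ≤ (w + (w * m) ^ 2) / T ^ 2 :=
          integral_sq_gaussianReal w (w * m) ▸
            measureReal_compl_Icc_le hT (integrable_sq_gaussianReal w (w * m))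
      _ ≤ (1 + m ^ 2) / T ^ 2 := by
          rw [mul_pow]
          gcongr
          exact mul_le_of_le_one_left (sq_nonneg m) (pow_le_one₀ w.coe_nonneg hw1)
  have hmass := probReal_add_probReal_compl (μ := gaussianReal (w * m) w)
    (measurableSet_Icc (a := -T) (b := T))
  calc shiftDensity (gaussianReal 0 v) m * (1 - (1 + m ^ 2) / T ^ 2)
      ≤ shiftDensity (gaussianReal 0 v) m *
          (gaussianReal (w * m) w).real (Set.Icc (-T) T) :=
        mul_le_mul_of_nonneg_left (by linarith) shiftDensity_gaussianReal_pos.le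
    _ = ∫ x in Set.Icc (-T) T, exp (m * x - x ^ 2 / 2) ∂gaussianReal 0 v := by
        rw [setIntegral_exp_shift_gaussianReal v m measurableSet_Icc, hw]
        push_cast
        rfl
    _ ≤ shiftDensity (truncate (gaussianReal 0 v) T) m := by
        rw [shiftDensity_truncate]
        exact le_add_of_nonneg_right measureReal_nonneg

lemma shiftDensity_gaussianReal_le_exp_mul_truncate (T : ℝ) :
    shiftDensity (gaussianReal 0 v) m ≤
      exp (m ^ 2 + v) * shiftDensity (truncate (gaussianReal 0 v) T) m := by
  have hsq : ∫ x, x ^ 2 ∂truncate (gaussianReal 0 v) T ≤ v := by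
    simpa [integral_sq_gaussianReal] using
      integral_sq_truncate_le (T := T) (integrable_sq_gaussianReal v 0)
  calc shiftDensity (gaussianReal 0 v) m ≤ exp (m ^ 2 / 2) := shiftDensity_le _ m
    _ ≤ exp (m ^ 2 + v) * exp (-(m ^ 2 / 2 + ∫ x, x ^ 2 ∂truncate (gaussianReal 0 v) T)) := by
        rw [← exp_add, exp_le_exp]
        linarith
    _ ≤ exp (m ^ 2 + v) * shiftDensity (truncate (gaussianReal 0 v) T) m := by
        gcongr
        exact exp_neg_le_shiftDensity (integrable_sq_truncate (integrable_sq_gaussianReal v 0)) m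

-- Chebyshev's bound on the tilted Gaussian is effective while `1 + m² ≤ T² / 2`; beyond that, the
-- crude bound `exp (m² + v)` suffices, because the exponent has a factor `2 (1 + m²) / T² > 1`.
lemma shiftDensity_gaussianReal_le (hT : 0 < T) :
    shiftDensity (gaussianReal 0 v) m ≤
      exp (2 * (1 + v) * (1 + m ^ 2) ^ 2 / T ^ 2) *
        shiftDensity (truncate (gaussianReal 0 v) T) m := by
  set y := (1 + m ^ 2) / T ^ 2 with hy
  set r := shiftDensity (truncate (gaussianReal 0 v) T) m
  have hr0 : 0 < r :=
    (exp_pos _).trans_le <| exp_neg_le_shiftDensity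
      (integrable_sq_truncate (integrable_sq_gaussianReal v 0)) m
  have hexponent : 2 * (1 + v) * (1 + m ^ 2) ^ 2 / T ^ 2 = (1 + v) * (1 + m ^ 2) * (2 * y) := by
    rw [hy]
    ring
  have : (0 : ℝ) ≤ v := v.coe_nonneg
  have hy0 : 0 ≤ y := by positivity
  have : 0 ≤ m ^ 2 := sq_nonneg m
  rw [hexponent]
  rcases le_or_gt y (1 / 2) with hsmall | hlarge
  · have hchebyshev : 1 ≤ exp (2 * y) * (1 - y) := by
      nlinarith [add_one_le_exp (2 * y)]
    calc shiftDensity (gaussianReal 0 v) m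
        ≤ exp (2 * y) * (shiftDensity (gaussianReal 0 v) m * (1 - y)) := by
          nlinarith [shiftDensity_gaussianReal_pos (v := v) (m := m)]
      _ ≤ exp (2 * y) * r :=
        mul_le_mul_of_nonneg_left (le_shiftDensity_truncate_gaussianReal hT) (exp_pos _).le
      _ ≤ exp ((1 + v) * (1 + m ^ 2) * (2 * y)) * r :=
        mul_le_mul_of_nonneg_right
          (exp_le_exp.2 (le_mul_of_one_le_left (by positivity) (by nlinarith))) hr0.le
  · refine (shiftDensity_gaussianReal_le_exp_mul_truncate T).trans ?_
    gcongr
    calc m ^ 2 + v ≤ (1 + v) * (1 + m ^ 2) := by nlinarith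
      _ ≤ (1 + v) * (1 + m ^ 2) * (2 * y) :=
        le_mul_of_one_le_right (by positivity) (by linarith)

end GaussianTilt

section SpinConfigurations

/-- The spin `±1` encoded by a Boolean. -/
def spin (b : Bool) : ℝ := if b then 1 else -1

/-- The rescaled magnetization `N^{-1/2} ∑ σ_i`. -/
noncomputable def mag {N : ℕ} (σ : Fin N → Bool) : ℝ := (∑ i, spin (σ i)) / √N

/-- The density at `σ`, relative to the uniform measure, of the mixture over `x ∼ ρ` of the product
measures under which each spin has mean `x / √N`. -/
noncomputable def mixtureDensity (ρ : Measure ℝ) {N : ℕ} (σ : Fin N → Bool) : ℝ :=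
  ∫ x, ∏ i, (1 + spin (σ i) * x / √N) ∂ρ

lemma spin_sq (b : Bool) : spin b ^ 2 = 1 := by cases b <;> simp [spin]

lemma abs_spin (b : Bool) : |spin b| = 1 := by cases b <;> simp [spin]

lemma sum_prod_bool {R : Type*} [CommSemiring R] (N : ℕ) (f : Bool → R) :
    ∑ σ : Fin N → Bool, ∏ i, f (σ i) = (f true + f false) ^ N := by
  rw [← Fintype.sum_pow, Fintype.sum_bool]

lemma sum_exp_mag_mul_le (N : ℕ) (t : ℝ) :
    ∑ σ : Fin N → Bool, exp (mag σ * t) ≤ 2 ^ N * exp (t ^ 2 / 2) := by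
  have hfactor (σ : Fin N → Bool) : exp (mag σ * t) = ∏ i, exp (spin (σ i) * (t / √N)) := by
    rw [← exp_sum, ← Finset.sum_mul, mag, div_mul_eq_mul_div, mul_div_assoc]
  have hcosh : exp (spin true * (t / √N)) + exp (spin false * (t / √N)) = 2 * cosh (t / √N) := by
    simp [spin, cosh_eq]
    ring
  have hvariance : N * ((t / √N) ^ 2 / 2) ≤ t ^ 2 / 2 := by
    rw [div_pow, sq_sqrt N.cast_nonneg, mul_div_assoc', mul_div_left_comm]
    gcongr
    exact mul_le_of_le_one_right (sq_nonneg t) (div_self_le_one _)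
  calc ∑ σ : Fin N → Bool, exp (mag σ * t) = 2 ^ N * cosh (t / √N) ^ N := by
        simp only [hfactor]
        rw [sum_prod_bool N fun b => exp (spin b * (t / √N)), hcosh, mul_pow]
    _ ≤ 2 ^ N * exp ((t / √N) ^ 2 / 2) ^ N := by
        gcongr
        exact cosh_le_exp_half_sq _
    _ ≤ 2 ^ N * exp (t ^ 2 / 2) := by
        rw [← exp_nat_mul]
        gcongr

-- Exchanging sum and integral linearizes the square in the Curie–Weiss weight
-- (the Hubbard–Stratonovich transform), so that the spins decouple.
lemma sum_shiftDensity_mag_le (ρ : Measure ℝ) [IsProbabilityMeasure ρ] (N : ℕ) :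
    ∑ σ : Fin N → Bool, shiftDensity ρ (mag σ) ≤ 2 ^ N := by
  have hpoint (x : ℝ) : ∑ σ : Fin N → Bool, exp (mag σ * x - x ^ 2 / 2) ≤ 2 ^ N := by
    simp only [exp_sub]
    rw [← Finset.sum_div, div_le_iff₀ (exp_pos _)]
    exact sum_exp_mag_mul_le N x
  have hintegral (σ : Fin N → Bool) := integrable_exp_shift ρ (mag σ)
  calc ∑ σ : Fin N → Bool, shiftDensity ρ (mag σ)
      = ∫ x, ∑ σ : Fin N → Bool, exp (mag σ * x - x ^ 2 / 2) ∂ρ :=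
        (integral_finsetSum _ fun σ _ => hintegral σ).symm
    _ ≤ ∫ _, 2 ^ N ∂ρ :=
        integral_mono (integrable_finsetSum _ fun σ _ => hintegral σ) (integrable_const _) hpoint
    _ = 2 ^ N := by simp

lemma abs_log_one_add_sub_le {x : ℝ} (hx : |x| ≤ 1 / 2) :
    |log (1 + x) - (x - x ^ 2 / 2)| ≤ 2 * |x| ^ 3 := by
  have htaylor := abs_log_sub_add_sum_range_le (x := -x) (by rw [abs_neg]; linarith) 2
  rw [abs_neg, sub_neg_eq_add] at htaylor
  calc |log (1 + x) - (x - x ^ 2 / 2)|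
      = |∑ i ∈ Finset.range 2, (-x) ^ (i + 1) / (i + 1) + log (1 + x)| := by
        congr 1
        norm_num [Finset.sum_range_succ]
        ring
    _ ≤ |x| ^ 3 / (1 - |x|) := htaylor
    _ ≤ |x| ^ 3 / (1 / 2) := by
        gcongr
        linarith
    _ = 2 * |x| ^ 3 := by ring

variable {N : ℕ} {T x : ℝ}

lemma abs_spin_mul_div_sqrt_le (b : Bool) (hx : |x| ≤ T) : |spin b * x / √N| ≤ T / √N := by
  rw [abs_div, abs_mul, abs_spin, one_mul, abs_of_nonneg (sqrt_nonneg _)]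
  gcongr

lemma one_add_spin_mul_div_sqrt_pos (hTN : T / √N ≤ 1 / 2) (b : Bool) (hx : |x| ≤ T) :
    0 < 1 + spin b * x / √N := by
  linarith [(abs_le.1 ((abs_spin_mul_div_sqrt_le b hx).trans hTN)).1]

lemma sum_spin_sub_sq (hN : N ≠ 0) (σ : Fin N → Bool) (x : ℝ) :
    ∑ i, (spin (σ i) * x / √N - (spin (σ i) * x / √N) ^ 2 / 2) = mag σ * x - x ^ 2 / 2 := by
  have hN' : (N : ℝ) ≠ 0 := Nat.cast_ne_zero.2 hN
  simp only [div_pow, mul_pow, spin_sq, sq_sqrt N.cast_nonneg]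
  rw [Finset.sum_sub_distrib, ← Finset.sum_div, ← Finset.sum_mul, Finset.sum_const,
    Finset.card_univ, Fintype.card_fin, nsmul_eq_mul, mag]
  field_simp

-- Each factor has Taylor error at most `2 (T / √N)³`, and there are `N` of them.
lemma abs_log_prod_sub_le (hN : N ≠ 0) (hTN : T / √N ≤ 1 / 2) (σ : Fin N → Bool) (hx : |x| ≤ T) :
    |log (∏ i, (1 + spin (σ i) * x / √N)) - (mag σ * x - x ^ 2 / 2)| ≤ 2 * (T ^ 3 / √N) := by
  have hcard : (N : ℝ) * (2 * (T / √N) ^ 3) = 2 * (T ^ 3 / √N) := by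
    have hN' : √(N : ℝ) ≠ 0 := by positivity
    nth_rw 1 [← sq_sqrt N.cast_nonneg]
    field_simp
  rw [log_prod fun i _ => (one_add_spin_mul_div_sqrt_pos hTN (σ i) hx).ne',
    ← sum_spin_sub_sq hN, ← Finset.sum_sub_distrib, ← hcard]
  calc _ ≤ ∑ i, |log (1 + spin (σ i) * x / √N) -
          (spin (σ i) * x / √N - (spin (σ i) * x / √N) ^ 2 / 2)| :=
        Finset.abs_sum_le_sum_abs _ _
    _ ≤ ∑ _ : Fin N, 2 * (T / √N) ^ 3 := Finset.sum_le_sum fun i _ => by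
        have hu := abs_spin_mul_div_sqrt_le (N := N) (σ i) hx
        exact (abs_log_one_add_sub_le (hu.trans hTN)).trans (by gcongr)
    _ = N * (2 * (T / √N) ^ 3) := by simp

lemma prod_one_add_spin_le (hN : N ≠ 0) (hTN : T / √N ≤ 1 / 2) (σ : Fin N → Bool)
    (hx : |x| ≤ T) :
    ∏ i, (1 + spin (σ i) * x / √N) ≤
      exp (2 * (T ^ 3 / √N)) * exp (mag σ * x - x ^ 2 / 2) := by
  have hpos := Finset.prod_pos fun i (_ : i ∈ Finset.univ) =>
    one_add_spin_mul_div_sqrt_pos hTN (σ i) hx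
  rw [← exp_add, ← log_le_iff_le_exp hpos]
  linarith [(abs_le.1 (abs_log_prod_sub_le hN hTN σ hx)).2]

lemma le_prod_one_add_spin (hN : N ≠ 0) (hTN : T / √N ≤ 1 / 2) (σ : Fin N → Bool)
    (hx : |x| ≤ T) :
    exp (mag σ * x - x ^ 2 / 2) ≤
      exp (2 * (T ^ 3 / √N)) * ∏ i, (1 + spin (σ i) * x / √N) := by
  have hpos := Finset.prod_pos fun i (_ : i ∈ Finset.univ) =>
    one_add_spin_mul_div_sqrt_pos hTN (σ i) hx
  rw [← inv_mul_le_iff₀ (exp_pos _), ← exp_neg, ← exp_add, ← le_log_iff_exp_le hpos]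
  linarith [(abs_le.1 (abs_log_prod_sub_le hN hTN σ hx)).1]

variable {ρ : Measure ℝ}

lemma integrable_of_continuous_of_ae_abs_le [IsFiniteMeasure ρ] (hρ : ∀ᵐ x ∂ρ, |x| ≤ T)
    {f : ℝ → ℝ} (hf : Continuous f) : Integrable f ρ := by
  obtain ⟨C, hC⟩ :=
    (isCompact_Icc (a := -T) (b := T)).exists_bound_of_continuousOn hf.continuousOn
  exact .of_bound hf.aestronglyMeasurable C (hρ.mono fun x hx => hC x (abs_le.1 hx))

lemma integrable_prod_one_add_spin [IsFiniteMeasure ρ] (hρ : ∀ᵐ x ∂ρ, |x| ≤ T)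
    (σ : Fin N → Bool) : Integrable (fun x => ∏ i, (1 + spin (σ i) * x / √N)) ρ :=
  integrable_of_continuous_of_ae_abs_le hρ (by fun_prop)

lemma sum_mixtureDensity [IsProbabilityMeasure ρ] (hρ : ∀ᵐ x ∂ρ, |x| ≤ T) (N : ℕ) :
    ∑ σ : Fin N → Bool, mixtureDensity ρ σ = 2 ^ N := by
  have hpoint (x : ℝ) : ∑ σ : Fin N → Bool, ∏ i, (1 + spin (σ i) * x / √N) = 2 ^ N := by
    rw [sum_prod_bool N fun b => 1 + spin b * x / √N]
    congr 1
    simp [spin]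
    ring
  simp only [mixtureDensity]
  rw [← integral_finsetSum _ fun σ _ => integrable_prod_one_add_spin hρ σ]
  simp [hpoint]

lemma mixtureDensity_le [IsFiniteMeasure ρ] (hN : N ≠ 0) (hTN : T / √N ≤ 1 / 2)
    (hρ : ∀ᵐ x ∂ρ, |x| ≤ T) (σ : Fin N → Bool) :
    mixtureDensity ρ σ ≤ exp (2 * (T ^ 3 / √N)) * shiftDensity ρ (mag σ) := by
  rw [shiftDensity, ← integral_const_mul]
  exact integral_mono_ae (integrable_prod_one_add_spin hρ σ)
    ((integrable_exp_shift ρ _).const_mul _) (hρ.mono fun _ => prod_one_add_spin_le hN hTN σ)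

lemma le_mixtureDensity [IsFiniteMeasure ρ] (hN : N ≠ 0) (hTN : T / √N ≤ 1 / 2)
    (hρ : ∀ᵐ x ∂ρ, |x| ≤ T) (σ : Fin N → Bool) :
    shiftDensity ρ (mag σ) ≤ exp (2 * (T ^ 3 / √N)) * mixtureDensity ρ σ := by
  rw [mixtureDensity, ← integral_const_mul]
  exact integral_mono_ae (integrable_exp_shift ρ _)
    ((integrable_prod_one_add_spin hρ σ).const_mul _)
    (hρ.mono fun _ => le_prod_one_add_spin hN hTN σ)

end SpinConfigurations

section CurieWeissMeasure

/-- The Curie–Weiss Gibbs measure at inverse temperature `β` without external field, as a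
probability mass function. -/
noncomputable def curieWeiss (β : ℝ) (N : ℕ) : (Fin N → Bool) → ℝ :=
  normalizeSum fun σ => exp (β / (2 * N) * ∑ i, ∑ j, spin (σ i) * spin (σ j))

lemma energy_eq_mag_sq (β : ℝ) {N : ℕ} (σ : Fin N → Bool) :
    β / (2 * N) * ∑ i, ∑ j, spin (σ i) * spin (σ j) = β * mag σ ^ 2 / 2 := by
  rcases eq_or_ne N 0 with rfl | hN
  · simp [mag]
  have : (N : ℝ) ≠ 0 := Nat.cast_ne_zero.2 hN
  rw [← Fintype.sum_mul_sum, mag, div_pow, sq_sqrt N.cast_nonneg]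
  field_simp

variable (v : ℝ≥0) (N : ℕ)

lemma curieWeiss_eq_normalizeSum :
    curieWeiss (v / (1 + v)) N =
      normalizeSum fun σ => shiftDensity (gaussianReal 0 v) (mag σ) := by
  have hsqrt : √(1 + v : ℝ) ≠ 0 := by positivity
  rw [← normalizeSum_const_mul hsqrt fun σ => shiftDensity _ (mag σ), curieWeiss]
  simp only [shiftDensity_gaussianReal, mul_div_cancel₀ _ hsqrt, energy_eq_mag_sq]

lemma two_pow_le_sum_shiftDensity_mag :
    2 ^ N ≤ √(1 + v) * ∑ σ : Fin N → Bool, shiftDensity (gaussianReal 0 v) (mag σ) :=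
  calc (2 : ℝ) ^ N = ∑ _σ : Fin N → Bool, 1 := by simp
    _ ≤ ∑ σ : Fin N → Bool, √(1 + v) * shiftDensity (gaussianReal 0 v) (mag σ) :=
      Finset.sum_le_sum fun σ _ =>
        (one_le_shiftDensity_gaussianReal_mul v (mag σ)).trans_eq (mul_comm _ _)
    _ = _ := (Finset.mul_sum _ _ _).symm

lemma one_add_sq_le_mul_exp {c x : ℝ} (hc : 0 < c) (hx : 0 ≤ x) :
    (1 + x) ^ 2 ≤ 2 * exp c / c ^ 2 * exp (c * x) := by
  have hquadratic : (c * (1 + x)) ^ 2 / 2 ≤ exp (c * (1 + x)) :=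
    le_trans (by nlinarith) (quadratic_le_exp_of_nonneg (x := c * (1 + x)) (by positivity))
  calc (1 + x) ^ 2 = 2 / c ^ 2 * ((c * (1 + x)) ^ 2 / 2) := by field_simp
    _ ≤ 2 / c ^ 2 * exp (c * (1 + x)) := by gcongr
    _ = 2 * exp c / c ^ 2 * exp (c * x) := by
      rw [mul_one_add, exp_add]
      ring

variable {v}

lemma exists_shiftDensity_gaussianReal_mul_le {w : ℝ≥0} (hvw : v < w) :
    ∃ K : ℝ, 0 ≤ K ∧ ∀ m, shiftDensity (gaussianReal 0 v) m * (1 + m ^ 2) ^ 2 ≤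
      K * shiftDensity (gaussianReal 0 w) m := by
  have : (v : ℝ) < w := hvw
  obtain ⟨c, hc⟩ : ∃ c : ℝ, c = (w / (1 + w) - v / (1 + v)) / 2 := ⟨_, rfl⟩
  have hc0 : 0 < c := by
    rw [hc]
    refine half_pos (sub_pos.2 ((div_lt_div_iff₀ (by positivity) (by positivity)).2 ?_))
    linarith
  have : √(1 + w : ℝ) ≠ 0 := by positivity
  refine ⟨2 * exp c / c ^ 2 * √(1 + w) / √(1 + v), by positivity, fun m => ?_⟩
  have hexp : exp (v / (1 + v) * m ^ 2 / 2) * exp (c * m ^ 2) = exp (w / (1 + w) * m ^ 2 / 2) := by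
    rw [← exp_add, hc]
    ring_nf
  rw [shiftDensity_gaussianReal, shiftDensity_gaussianReal, ← hexp]
  calc exp (v / (1 + v) * m ^ 2 / 2) / √(1 + v) * (1 + m ^ 2) ^ 2
      ≤ exp (v / (1 + v) * m ^ 2 / 2) / √(1 + v) * (2 * exp c / c ^ 2 * exp (c * m ^ 2)) := by
        gcongr
        exact one_add_sq_le_mul_exp hc0 (sq_nonneg m)
    _ = _ := by field_simp

variable (v)

-- The fourth moment is absorbed by raising the variance `v`, which keeps the partition function
-- of order `2 ^ N`.
lemma exists_sum_curieWeiss_mul_le :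
    ∃ K : ℝ, ∀ N : ℕ,
      ∑ σ, curieWeiss (v / (1 + v)) N σ * (1 + mag σ ^ 2) ^ 2 ≤ K := by
  obtain ⟨K, hK, hmoment⟩ := exists_shiftDensity_gaussianReal_mul_le (lt_add_one v)
  refine ⟨K * √(1 + v), fun N => ?_⟩
  simp only [curieWeiss_eq_normalizeSum, normalizeSum, div_mul_eq_mul_div]
  rw [← Finset.sum_div, div_le_iff₀ (sum_pos_of_pos fun _ => shiftDensity_gaussianReal_pos)]
  calc ∑ σ : Fin N → Bool, shiftDensity (gaussianReal 0 v) (mag σ) * (1 + mag σ ^ 2) ^ 2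
      ≤ K * ∑ σ : Fin N → Bool, shiftDensity (gaussianReal 0 (v + 1)) (mag σ) := by
        rw [Finset.mul_sum]
        exact Finset.sum_le_sum fun σ _ => hmoment (mag σ)
    _ ≤ K * 2 ^ N := mul_le_mul_of_nonneg_left (sum_shiftDensity_mag_le _ N) hK
    _ ≤ _ := by
        rw [mul_assoc]
        exact mul_le_mul_of_nonneg_left (two_pow_le_sum_shiftDensity_mag v N) hK

end CurieWeissMeasure

section Comparison

variable {v : ℝ≥0} {N : ℕ} {T : ℝ}

/-- The mixture over `x ∼ ρ` of the product measures on `{-1, 1}^N` under which each spin has mean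
`x / √N`, as a mass function. -/
noncomputable def spinMixture (ρ : Measure ℝ) (N : ℕ) (σ : Fin N → Bool) : ℝ :=
  2 ^ (-(N : ℤ)) * mixtureDensity ρ σ

lemma spinMixture_eq_normalizeSum {ρ : Measure ℝ} [IsProbabilityMeasure ρ]
    (hρ : ∀ᵐ x ∂ρ, |x| ≤ T) (N : ℕ) : spinMixture ρ N = normalizeSum (mixtureDensity ρ) := by
  funext σ
  rw [spinMixture, normalizeSum, sum_mixtureDensity hρ, div_eq_inv_mul, zpow_neg, zpow_natCast]

lemma spinMixture_truncate_gaussianReal (hv : v ≠ 0) (σ : Fin N → Bool) :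
    spinMixture (truncate (gaussianReal 0 v) T) N σ = 2 ^ (-(N : ℤ)) *
      ∫ t, (∏ i, (1 + spin (σ i) * (if |t| ≤ T then t else 0) / √N)) * gaussianPDFReal 0 v t := by
  rw [spinMixture, mixtureDensity, integral_truncate (by fun_prop),
    integral_gaussianReal_eq_integral_smul hv]
  simp only [smul_eq_mul, mul_comm (gaussianPDFReal 0 v _), Set.indicator_apply, Set.mem_Icc,
    ← abs_le, id]

lemma mixtureDensity_truncate_le (hN : N ≠ 0) (hT : 0 < T) (hTN : T / √N ≤ 1 / 2)
    (σ : Fin N → Bool) :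
    mixtureDensity (truncate (gaussianReal 0 v) T) σ ≤
      exp (2 * (T ^ 3 / √N) + √(1 + v) * v / T ^ 2) * shiftDensity (gaussianReal 0 v) (mag σ) := by
  rw [exp_add, mul_assoc]
  exact (mixtureDensity_le hN hTN (ae_truncate_abs_le hT.le) σ).trans <|
    mul_le_mul_of_nonneg_left (shiftDensity_truncate_gaussianReal_le hT) (exp_pos _).le

lemma shiftDensity_gaussianReal_mag_le (hN : N ≠ 0) (hT : 0 < T) (hTN : T / √N ≤ 1 / 2)
    (σ : Fin N → Bool) :
    shiftDensity (gaussianReal 0 v) (mag σ) ≤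
      exp (2 * (T ^ 3 / √N) + 2 * (1 + v) * (1 + mag σ ^ 2) ^ 2 / T ^ 2) *
        mixtureDensity (truncate (gaussianReal 0 v) T) σ := by
  rw [add_comm, exp_add, mul_assoc]
  exact (shiftDensity_gaussianReal_le hT).trans <|
    mul_le_mul_of_nonneg_left (le_mixtureDensity hN hTN (ae_truncate_abs_le hT.le) σ)
      (exp_pos _).le

lemma mixtureDensity_truncate_pos (hN : N ≠ 0) (hT : 0 < T) (hTN : T / √N ≤ 1 / 2)
    (σ : Fin N → Bool) : 0 < mixtureDensity (truncate (gaussianReal 0 v) T) σ :=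
  pos_of_mul_pos_right (shiftDensity_gaussianReal_pos.trans_le
    (shiftDensity_gaussianReal_mag_le (v := v) hN hT hTN σ)) (exp_pos _).le

lemma relEnt_spinMixture_nonneg (hN : N ≠ 0) (hT : 0 < T) (hTN : T / √N ≤ 1 / 2) :
    0 ≤ relEnt (spinMixture (truncate (gaussianReal 0 v) T) N) (curieWeiss (v / (1 + v)) N) := by
  rw [spinMixture_eq_normalizeSum (ae_truncate_abs_le hT.le), curieWeiss_eq_normalizeSum]
  exact relEnt_normalizeSum_nonneg (mixtureDensity_truncate_pos hN hT hTN)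
    fun _ => shiftDensity_gaussianReal_pos

lemma relEnt_curieWeiss_nonneg (hN : N ≠ 0) (hT : 0 < T) (hTN : T / √N ≤ 1 / 2) :
    0 ≤ relEnt (curieWeiss (v / (1 + v)) N) (spinMixture (truncate (gaussianReal 0 v) T) N) := by
  rw [spinMixture_eq_normalizeSum (ae_truncate_abs_le hT.le), curieWeiss_eq_normalizeSum]
  exact relEnt_normalizeSum_nonneg (fun _ => shiftDensity_gaussianReal_pos)
    (mixtureDensity_truncate_pos hN hT hTN)

lemma relEnt_spinMixture_le (hN : N ≠ 0) (hT : 0 < T) (hTN : T / √N ≤ 1 / 2) :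
    relEnt (spinMixture (truncate (gaussianReal 0 v) T) N) (curieWeiss (v / (1 + v)) N) ≤
      2 * (T ^ 3 / √N) + √(1 + v) * v / T ^ 2 := by
  have htrunc := ae_truncate_abs_le (ρ := gaussianReal 0 v) hT.le
  have hsum := sum_mixtureDensity htrunc N
  have hbound := relEnt_normalizeSum_le (c := 0) (mixtureDensity_truncate_pos (v := v) hN hT hTN)
    (fun _ => shiftDensity_gaussianReal_pos) (mixtureDensity_truncate_le hN hT hTN)
    (by simpa only [exp_zero, one_mul, hsum] using sum_shiftDensity_mag_le (gaussianReal 0 v) N)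
  rw [spinMixture_eq_normalizeSum htrunc, curieWeiss_eq_normalizeSum]
  rwa [← Finset.sum_mul, sum_normalizeSum (by rw [hsum]; positivity), one_mul, add_zero] at hbound

lemma relEnt_curieWeiss_le (hN : N ≠ 0) (hT : 0 < T) (hTN : T / √N ≤ 1 / 2) {K : ℝ}
    (hK : ∑ σ, curieWeiss (v / (1 + v)) N σ * (1 + mag σ ^ 2) ^ 2 ≤ K) :
    relEnt (curieWeiss (v / (1 + v)) N) (spinMixture (truncate (gaussianReal 0 v) T) N) ≤
      4 * (T ^ 3 / √N) + (2 * (1 + v) * K + √(1 + v) * v) / T ^ 2 := by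
  rw [spinMixture_eq_normalizeSum (ae_truncate_abs_le hT.le)]
  rw [curieWeiss_eq_normalizeSum] at hK ⊢
  set p := normalizeSum fun σ : Fin N → Bool => shiftDensity (gaussianReal 0 v) (mag σ)
  have hp : ∑ σ, p σ = 1 :=
    sum_normalizeSum (sum_pos_of_pos fun _ => shiftDensity_gaussianReal_pos).ne'
  calc _ ≤ ∑ σ, p σ * (2 * (T ^ 3 / √N) + 2 * (1 + v) * (1 + mag σ ^ 2) ^ 2 / T ^ 2) +
          (2 * (T ^ 3 / √N) + √(1 + v) * v / T ^ 2) := by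
        refine relEnt_normalizeSum_le (fun _ => shiftDensity_gaussianReal_pos)
          (mixtureDensity_truncate_pos hN hT hTN) (shiftDensity_gaussianReal_mag_le hN hT hTN) ?_
        rw [Finset.mul_sum]
        exact Finset.sum_le_sum fun σ _ => mixtureDensity_truncate_le hN hT hTN σ
    _ = 4 * (T ^ 3 / √N) +
          (2 * (1 + v) * (∑ σ, p σ * (1 + mag σ ^ 2) ^ 2) + √(1 + v) * v) / T ^ 2 := by
        simp only [mul_add (p _), mul_div_assoc', mul_left_comm (p _), Finset.sum_add_distrib,
          ← Finset.sum_mul, ← Finset.sum_div, ← Finset.mul_sum, hp]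
        ring
    _ ≤ 4 * (T ^ 3 / √N) + (2 * (1 + v) * K + √(1 + v) * v) / T ^ 2 := by gcongr

end Comparison

section Limits

lemma tendsto_relEnt_curieWeiss_spinMixture (v : ℝ≥0) {T : ℕ → ℝ} (hT : Tendsto T atTop atTop)
    (hTN : Tendsto (fun N => T N ^ 3 / √N) atTop (nhds 0)) :
    Tendsto (fun N => relEnt (curieWeiss (v / (1 + v)) N)
        (spinMixture (truncate (gaussianReal 0 v) (T N)) N)) atTop (nhds 0) ∧
      Tendsto (fun N => relEnt (spinMixture (truncate (gaussianReal 0 v) (T N)) N)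
        (curieWeiss (v / (1 + v)) N)) atTop (nhds 0) := by
  obtain ⟨K, hK⟩ := exists_sum_curieWeiss_mul_le v
  have herror (a b : ℝ) : Tendsto (fun N => a * (T N ^ 3 / √N) + b / T N ^ 2) atTop (nhds 0) := by
    simpa using (hTN.const_mul a).add
      (((tendsto_pow_atTop two_ne_zero).comp hT).const_div_atTop b)
  have hadmissible : ∀ᶠ N : ℕ in atTop, N ≠ 0 ∧ 0 < T N ∧ T N / √N ≤ 1 / 2 := by
    filter_upwards [eventually_ne_atTop 0, hT.eventually_ge_atTop 1,
      hTN.eventually_le_const one_half_pos] with N hN hT1 hcube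
    refine ⟨hN, by linarith, le_trans ?_ hcube⟩
    gcongr
    exact le_self_pow₀ hT1 three_ne_zero
  constructor
  · exact squeeze_zero'
      (hadmissible.mono fun N ⟨hN, hT, hTN⟩ => relEnt_curieWeiss_nonneg hN hT hTN)
      (hadmissible.mono fun N ⟨hN, hT, hTN⟩ => relEnt_curieWeiss_le hN hT hTN (hK N)) (herror _ _)
  · exact squeeze_zero'
      (hadmissible.mono fun N ⟨hN, hT, hTN⟩ => relEnt_spinMixture_nonneg hN hT hTN)
      (hadmissible.mono fun N ⟨hN, hT, hTN⟩ => relEnt_spinMixture_le hN hT hTN) (herror _ _)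

lemma tendsto_natCast_rpow_atTop {δ : ℝ} (hδ : 0 < δ) :
    Tendsto (fun N : ℕ => (N : ℝ) ^ δ) atTop atTop :=
  (tendsto_rpow_atTop hδ).comp tendsto_natCast_atTop_atTop

lemma tendsto_natCast_rpow_cube_div_sqrt {δ : ℝ} (hδ : δ < 1 / 6) :
    Tendsto (fun N : ℕ => ((N : ℝ) ^ δ) ^ 3 / √N) atTop (nhds 0) := by
  have hlim := (tendsto_rpow_neg_atTop (y := 1 / 2 - 3 * δ) (by linarith)).comp
    tendsto_natCast_atTop_atTop
  refine hlim.congr' ((eventually_gt_atTop 0).mono fun N hN => ?_)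
  have hN : (0 : ℝ) < N := Nat.cast_pos.2 hN
  simp only [Function.comp_apply]
  rw [sqrt_eq_rpow, ← rpow_mul_natCast hN.le, ← rpow_sub hN]
  congr 1
  push_cast
  ring

end Limits

end CurieWeiss

open CurieWeiss ProbabilityTheory in
theorem stmt_6_general
    (β : ℝ) (hβ0 : 0 < β) (hβ1 : β < 1)
    (T : ℕ → ℝ) (hT : Tendsto T atTop atTop)
    (hTN : Tendsto (fun N => T N ^ 3 / Real.sqrt N) atTop (nhds 0))
    (spin : Bool → ℝ) (hspin : ∀ b, spin b = if b then 1 else -1)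
    (Z : ℕ → ℝ)
    (hZ : ∀ N : ℕ, Z N = ∑ σ : Fin N → Bool,
      Real.exp (β / (2 * N) * ∑ i, ∑ j, spin (σ i) * spin (σ j)))
    (μ : ∀ N : ℕ, (Fin N → Bool) → ℝ)
    (hμ : ∀ N σ, μ N σ =
      Real.exp (β / (2 * N) * ∑ i, ∑ j, spin (σ i) * spin (σ j)) / Z N)
    (gauss : ℝ → ℝ)
    (hgauss : ∀ t, gauss t =
      Real.exp (-t ^ 2 / (2 * (β / (1 - β)))) / Real.sqrt (2 * Real.pi * (β / (1 - β))))
    (ν : ∀ N : ℕ, (Fin N → Bool) → ℝ)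
    (hν : ∀ N σ, ν N σ = (2 : ℝ) ^ (-(N : ℤ)) *
      ∫ t : ℝ, (∏ i, (1 + spin (σ i) *
        (if |t| ≤ T N then t else 0) / Real.sqrt N)) * gauss t) :
    Tendsto (fun N => relEnt (μ N) (ν N)) atTop (nhds 0) ∧
      Tendsto (fun N => relEnt (ν N) (μ N)) atTop (nhds 0) := by
  obtain rfl : spin = CurieWeiss.spin := funext hspin
  have hvar : 0 < β / (1 - β) := div_pos hβ0 (sub_pos.2 hβ1)
  obtain ⟨v, hv⟩ : ∃ v : NNReal, (v : ℝ) = β / (1 - β) := ⟨⟨_, hvar.le⟩, rfl⟩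
  have hβ : β = v / (1 + v) := by
    have := (sub_pos.2 hβ1).ne'
    rw [hv]
    field_simp
    ring
  obtain rfl : gauss = gaussianPDFReal 0 v := by
    funext t
    rw [hgauss, gaussianPDFReal, hv, sub_zero]
    ring
  have hμ' (N : ℕ) : μ N = curieWeiss (v / (1 + v)) N :=
    funext fun σ => by rw [hμ, hZ, hβ]; rfl
  have hν' (N : ℕ) : ν N = spinMixture (truncate (gaussianReal 0 v) (T N)) N := by
    have hv0 : v ≠ 0 := by exact_mod_cast hv ▸ hvar.ne'
    exact funext fun σ => by rw [hν, spinMixture_truncate_gaussianReal hv0]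
  simp only [hμ', hν']
  exact tendsto_relEnt_curieWeiss_spinMixture v hT hTN

/-- For the Curie–Weiss model with `0 < β < 1` and `h = 0`, with
`ξ̃ ∼ N(0, β/(1−β))` truncated at `N^δ` (`0 < δ < 1/6`) and the mixture of product
measures `ν_N(σ) = 2^{−N} E[∏_i (1 + σ_i ξ_N/√N)]`, one has `H(μ_N|ν_N) → 0` and
`H(ν_N|μ_N) → 0` as `N → ∞`. Spins `±1` are encoded by `Bool` via `spin`. -/
theorem stmt_6
    (β : ℝ) (hβ0 : 0 < β) (hβ1 : β < 1)
    (δ : ℝ) (hδ0 : 0 < δ) (hδ : δ < 1 / 6)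
    (spin : Bool → ℝ) (hspin : ∀ b, spin b = if b then 1 else -1)
    (Z : ℕ → ℝ)
    (hZ : ∀ N : ℕ, Z N = ∑ σ : Fin N → Bool,
      Real.exp (β / (2 * N) * ∑ i, ∑ j, spin (σ i) * spin (σ j)))
    (μ : ∀ N : ℕ, (Fin N → Bool) → ℝ)
    (hμ : ∀ N σ, μ N σ =
      Real.exp (β / (2 * N) * ∑ i, ∑ j, spin (σ i) * spin (σ j)) / Z N)
    (gauss : ℝ → ℝ)
    (hgauss : ∀ t, gauss t =
      Real.exp (-t ^ 2 / (2 * (β / (1 - β)))) / Real.sqrt (2 * Real.pi * (β / (1 - β))))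
    (ν : ∀ N : ℕ, (Fin N → Bool) → ℝ)
    (hν : ∀ N σ, ν N σ = (2 : ℝ) ^ (-(N : ℤ)) *
      ∫ t : ℝ, (∏ i, (1 + spin (σ i) *
        (if |t| ≤ (N : ℝ) ^ δ then t else 0) / Real.sqrt N)) * gauss t) :
    Tendsto (fun N => relEnt (μ N) (ν N)) atTop (nhds 0) ∧
      Tendsto (fun N => relEnt (ν N) (μ N)) atTop (nhds 0) :=
  stmt_6_general β hβ0 hβ1 (fun N => (N : ℝ) ^ δ) (CurieWeiss.tendsto_natCast_rpow_atTop hδ0)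
    (CurieWeiss.tendsto_natCast_rpow_cube_div_sqrt hδ) spin hspin Z hZ μ hμ gauss hgauss ν hν
end

section
/- Let β > 1 and h = 0, and let m^+ ∈ (0,1) be the largest solution of z = tanh(βz). Set r² = β(1−(m^+)²)² / (4 − 4β(1−(m^+)²)). Fix 0 < δ < 1/6, let ξ̃ be a real random variable with the Gaussian density of mean 0 and variance r², set ξ_N = ξ̃ 1{|ξ̃| ≤ N^δ}, and define ν_N(σ) = ½ E[∏_{i=1}^N ((1 + σ_i m^+)/2 + σ_i ξ_N/√N) + ∏_{i=1}^N ((1 − σ_i m^+)/2 + σ_i ξ_N/√N)] for σ ∈ {−1,+1}^N. Then H(μ_N | ν_N) → 0 and H(ν_N | μ_N) → 0 as N → ∞. -/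
open Filter Real MeasureTheory

/-!
By the Hubbard–Stratonovich transformation, `μ_N` is a mixture over `y > 0` of symmetrised product
measures of mean spins `±tanh y`, with weight `exp (-N * mixingRate β y)`. Substituting
`ξ = √N (tanh y - m) / 2` for the Gaussian variable turns `ν_N` into a mixture of the same product
measures, and `r²` is the variance for which the two weights have the same curvature at their common
peak `y = β m`. For truncation at level `T`, Taylor expansion shows that on the core `|ξ| ≤ T` the
weights are proportional up to factors `exp (O(T³ / √N))`, and by Laplace's method both measures
give the complement mass `O(exp (-c T²))`, which is `o(1 / N)`. Such a two-sided comparison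
determines the constant of proportionality to leading order, because both total masses are `1`; and
since all atoms are at least `exp (-M N)`, an error of mass `o(1 / N)` is negligible in the
relative entropy.
-/

/-! ### The hyperbolic tangent -/

lemma hasDerivAt_tanh (y : ℝ) : HasDerivAt tanh (1 - tanh y ^ 2) y := by
  have h := (hasDerivAt_sinh y).div (hasDerivAt_cosh y) (cosh_pos y).ne'
  rw [show sinh / cosh = tanh from funext fun x ↦ (tanh_eq_sinh_div_cosh x).symm] at h
  refine h.congr_deriv ?_
  rw [tanh_eq_sinh_div_cosh]
  field_simp [(cosh_pos y).ne']

lemma continuous_tanh : Continuous tanh :=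
  continuous_iff_continuousAt.2 fun y ↦ (hasDerivAt_tanh y).continuousAt

lemma strictMono_tanh : StrictMono tanh :=
  strictMono_of_hasDerivAt_pos hasDerivAt_tanh fun y ↦ sub_pos.2 (tanh_sq_lt_one y)

lemma tanh_nonneg {y : ℝ} (hy : 0 ≤ y) : 0 ≤ tanh y :=
  tanh_zero.symm.trans_le (strictMono_tanh.monotone hy)

lemma one_sub_tanh_sq (y : ℝ) : 1 - tanh y ^ 2 = 1 / cosh y ^ 2 := by
  rw [tanh_eq_sinh_div_cosh]
  field_simp
  exact sub_eq_of_eq_add' (cosh_sq' y ▸ (add_comm _ _))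

lemma abs_one_sub_tanh_sq_le (y : ℝ) : |1 - tanh y ^ 2| ≤ 1 :=
  abs_le.2 ⟨by linarith [tanh_sq_lt_one y], by linarith [sq_nonneg (tanh y)]⟩

lemma abs_tanh_sub_le (x y : ℝ) : |tanh x - tanh y| ≤ |x - y| := by
  simpa [norm_eq_abs] using convex_univ.norm_image_sub_le_of_norm_hasDerivWithin_le
    (fun z _ ↦ (hasDerivAt_tanh z).hasDerivWithinAt) (fun z _ ↦ abs_one_sub_tanh_sq_le z)
    (Set.mem_univ y) (Set.mem_univ x)

lemma mul_abs_sub_le_abs_tanh_sub {ρ x y : ℝ} (hx : |tanh x| ≤ ρ) (hy : |tanh y| ≤ ρ) :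
    (1 - ρ ^ 2) * |x - y| ≤ |tanh x - tanh y| := by
  wlog hxy : y ≤ x generalizing x y
  · simpa only [abs_sub_comm] using this hy hx (le_of_not_ge hxy)
  rw [abs_of_nonneg (sub_nonneg.2 hxy),
    abs_of_nonneg (sub_nonneg.2 (strictMono_tanh.monotone hxy))]
  refine (convex_Icc y x).mul_sub_le_image_sub_of_le_deriv continuous_tanh.continuousOn
    (fun z _ ↦ (hasDerivAt_tanh z).differentiableAt.differentiableWithinAt) (fun z hz ↦ ?_)
    y (Set.left_mem_Icc.2 hxy) x (Set.right_mem_Icc.2 hxy) hxy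
  have hz' := interior_subset hz
  have hzρ : |tanh z| ≤ ρ := abs_le.2
    ⟨(abs_le.1 hy).1.trans (strictMono_tanh.monotone hz'.1),
      (strictMono_tanh.monotone hz'.2).trans (abs_le.1 hx).2⟩
  rw [(hasDerivAt_tanh z).deriv]
  linarith [sq_le_sq' (abs_le.1 hzρ).1 (abs_le.1 hzρ).2]

lemma concaveOn_tanh : ConcaveOn ℝ (Set.Ici 0) tanh := by
  refine AntitoneOn.concaveOn_of_deriv (convex_Ici 0) continuous_tanh.continuousOn
    (fun x _ ↦ (hasDerivAt_tanh x).differentiableAt.differentiableWithinAt) fun x hx y _ hxy ↦ ?_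
  rw [(hasDerivAt_tanh x).deriv, (hasDerivAt_tanh y).deriv]
  have hx0 := tanh_nonneg (interior_subset hx : x ∈ Set.Ici 0)
  linarith [pow_le_pow_left₀ hx0 (strictMono_tanh.monotone hxy) 2]

lemma tanh_lt_two_mul_tanh_half {y : ℝ} (hy : 0 < y) : tanh y < 2 * tanh (y / 2) := by
  have ht : 0 < tanh (y / 2) := tanh_zero.symm.trans_lt (strictMono_tanh (half_pos hy))
  have h2 : tanh y = 2 * tanh (y / 2) / (1 + tanh (y / 2) ^ 2) := by
    have hy2 : y = 2 * (y / 2) := by ring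
    rw [tanh_eq_sinh_div_cosh, tanh_eq_sinh_div_cosh]
    nth_rw 1 2 [hy2]
    rw [sinh_two_mul, cosh_two_mul]
    field_simp
  rw [h2]
  exact div_lt_self (by positivity) (by linarith [pow_pos ht 2])

lemma mul_one_sub_tanh_sq_lt_tanh {y : ℝ} (hy : 0 < y) : y * (1 - tanh y ^ 2) < tanh y := by
  have h2 : 2 * y < sinh (2 * y) := self_lt_sinh_iff.2 (by positivity)
  rw [sinh_two_mul] at h2
  rw [one_sub_tanh_sq, tanh_eq_sinh_div_cosh, mul_one_div,
    div_lt_div_iff₀ (by positivity) (by positivity)]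
  nlinarith [cosh_pos y]

/-! ### Taylor-type bounds from derivative bounds -/

lemma abs_le_pow_succ_of_deriv {f f' : ℝ → ℝ} {y₀ C : ℝ} {n : ℕ} (hC : 0 ≤ C)
    (hf : ∀ y, HasDerivAt f (f' y) y) (hf₀ : f y₀ = 0)
    (hf' : ∀ y, |f' y| ≤ C * |y - y₀| ^ n) (y : ℝ) : |f y| ≤ C * |y - y₀| ^ (n + 1) := by
  have h := (convex_uIcc y₀ y).norm_image_sub_le_of_norm_hasDerivWithin_le
    (C := C * |y - y₀| ^ n) (fun z _ ↦ (hf z).hasDerivWithinAt) (fun z hz ↦ (hf' z).trans ?_)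
    Set.left_mem_uIcc Set.right_mem_uIcc
  · rwa [hf₀, sub_zero, norm_eq_abs, norm_eq_abs, mul_assoc, ← pow_succ] at h
  · have := Set.abs_sub_left_of_mem_uIcc hz
    gcongr

lemma mul_sq_le_sub_of_mul_sq_le_deriv {f f' : ℝ → ℝ} {s y₀ : ℝ} {I : Set ℝ} (hI : Convex ℝ I)
    (hy₀ : y₀ ∈ I) (hf : ∀ y, HasDerivAt f (f' y) y)
    (hf' : ∀ y ∈ I, s * (y - y₀) ^ 2 ≤ f' y * (y - y₀)) {y : ℝ} (hy : y ∈ I) :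
    s / 2 * (y - y₀) ^ 2 ≤ f y - f y₀ := by
  -- Along the segment from `y₀` to `y`, the difference of the two sides is monotone.
  have hline : ∀ t : ℝ, HasDerivAt
      (fun t : ℝ ↦ f (y₀ + t * (y - y₀)) - s / 2 * (t * (y - y₀)) ^ 2)
      (f' (y₀ + t * (y - y₀)) * (y - y₀) - s * t * (y - y₀) ^ 2) t := fun t ↦ by
    have hlin := (hasDerivAt_id t).mul_const (y - y₀)
    refine (((hf _).comp t (hlin.const_add y₀)).sub
      ((hlin.pow 2).const_mul (s / 2))).congr_deriv ?_
    simp only [id, one_mul, Nat.cast_ofNat]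
    ring
  have hmono := monotoneOn_of_hasDerivWithinAt_nonneg (convex_Icc (0 : ℝ) 1)
    (fun t _ ↦ (hline t).continuousAt.continuousWithinAt)
    (fun t _ ↦ (hline t).hasDerivWithinAt) fun t ht ↦ by
      rw [interior_Icc] at ht
      have h := hf' _ (hI.add_smul_sub_mem hy₀ hy ⟨ht.1.le, ht.2.le⟩)
      rw [smul_eq_mul, add_sub_cancel_left] at h
      refine sub_nonneg.2 (le_of_mul_le_mul_left ?_ ht.1)
      linarith
  have h := hmono (Set.left_mem_Icc.2 zero_le_one) (Set.right_mem_Icc.2 zero_le_one) zero_le_one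
  simp only [zero_mul, add_zero, one_mul, add_sub_cancel] at h
  linarith

lemma exists_mul_sq_le_sub_of_convexOn_deriv {f f' : ℝ → ℝ} {y₀ : ℝ}
    (hf : ∀ y, HasDerivAt f (f' y) y) (hconv : ConvexOn ℝ (Set.Ici 0) f') (hy₀ : 0 < y₀)
    (hf'₀ : f' 0 ≤ 0) (hf'y₀ : f' y₀ = 0) (hf'half : f' (y₀ / 2) < 0) :
    ∃ c, 0 < c ∧ ∀ y, 0 ≤ y → c * (y - y₀) ^ 2 ≤ f y - f y₀ := by
  set s := -f' (y₀ / 2) / (y₀ / 2) with hs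
  have hs0 : 0 < s := div_pos (neg_pos.2 hf'half) (half_pos hy₀)
  have hs' : s * (y₀ / 2) = -f' (y₀ / 2) := div_mul_cancel₀ _ (half_pos hy₀).ne'
  -- `s` is the slope of the chord of `f'` over `[y₀ / 2, y₀]`.
  have hright : ∀ y ∈ Set.Ici (y₀ / 2), s * (y - y₀) ^ 2 ≤ f' y * (y - y₀) := by
    intro y (hy : y₀ / 2 ≤ y)
    rcases lt_trichotomy y y₀ with hlt | rfl | hgt
    · rcases hy.eq_or_lt with rfl | hy
      · nlinarith
      · have h := hconv.slope_mono_adjacent (half_pos hy₀).le hy₀.le hy hlt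
        rw [hf'y₀, zero_sub, div_le_div_iff₀ (sub_pos.2 hy) (sub_pos.2 hlt)] at h
        nlinarith
    · simp
    · have h := hconv.slope_mono_adjacent (half_pos hy₀).le (hy₀.trans hgt).le
        (half_lt_self hy₀) hgt
      rw [hf'y₀, zero_sub, sub_zero, show y₀ - y₀ / 2 = y₀ / 2 by ring, ← hs,
        le_div_iff₀ (sub_pos.2 hgt)] at h
      nlinarith
  have hquad := fun y hy ↦ mul_sq_le_sub_of_mul_sq_le_deriv (y := y) (convex_Ici (y₀ / 2))
    (half_le_self hy₀.le) hf hright hy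
  have hanti : AntitoneOn f (Set.Icc 0 y₀) :=
    antitoneOn_of_hasDerivWithinAt_nonpos (convex_Icc _ _)
      (fun x _ ↦ (hf x).continuousAt.continuousWithinAt) (fun x _ ↦ (hf x).hasDerivWithinAt)
      fun x hx ↦ ((hconv.subset Set.Icc_subset_Ici_self (convex_Icc _ _)).le_max_of_mem_Icc
        (Set.left_mem_Icc.2 hy₀.le) (Set.right_mem_Icc.2 hy₀.le) (interior_subset hx)).trans
        (max_le hf'₀ hf'y₀.le)
  refine ⟨s / 8, by positivity, fun y hy ↦ ?_⟩
  rcases le_total (y₀ / 2) y with h | h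
  · nlinarith [hquad y h, sq_nonneg (y - y₀)]
  · have h1 := hquad (y₀ / 2) Set.self_mem_Ici
    have h2 := hanti ⟨hy, h.trans (half_le_self hy₀.le)⟩
      ⟨(half_pos hy₀).le, half_le_self hy₀.le⟩ h
    nlinarith [mul_nonneg hs0.le (mul_nonneg hy (sub_nonneg.2 h)), mul_nonneg hs0.le hy]

/-! ### The rate function of the mixing variable -/

/-- The exponential rate of the Hubbard–Stratonovich mixing density: the Curie–Weiss measure is
a mixture, with weights `exp (-N * mixingRate β y)`, of product measures of mean spin `tanh y`. -/
noncomputable def mixingRate (β y : ℝ) : ℝ := y ^ 2 / (2 * β) - log (cosh y)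

section MixingRate

variable {β m : ℝ}

lemma mixingRate_neg (β y : ℝ) : mixingRate β (-y) = mixingRate β y := by simp [mixingRate]

lemma hasDerivAt_log_cosh (y : ℝ) : HasDerivAt (fun y ↦ log (cosh y)) (tanh y) y := by
  rw [tanh_eq_sinh_div_cosh]
  exact (hasDerivAt_cosh y).log (cosh_pos y).ne'

lemma abs_log_cosh_sub_le (x y : ℝ) : |log (cosh x) - log (cosh y)| ≤ |x - y| := by
  simpa [norm_eq_abs] using convex_univ.norm_image_sub_le_of_norm_hasDerivWithin_le
    (fun z _ ↦ (hasDerivAt_log_cosh z).hasDerivWithinAt) (fun z _ ↦ (abs_tanh_lt_one z).le)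
    (Set.mem_univ y) (Set.mem_univ x)

lemma hasDerivAt_mixingRate (β y : ℝ) : HasDerivAt (mixingRate β) (y / β - tanh y) y := by
  refine (((hasDerivAt_pow 2 y).div_const (2 * β)).sub (hasDerivAt_log_cosh y)).congr_deriv ?_
  rw [Nat.cast_ofNat, pow_one, mul_div_mul_left _ _ two_ne_zero]

lemma hasDerivAt_deriv_mixingRate (β y : ℝ) :
    HasDerivAt (fun y ↦ y / β - tanh y) (1 / β - (1 - tanh y ^ 2)) y :=
  ((hasDerivAt_id y).div_const β).sub (hasDerivAt_tanh y)

lemma continuous_mixingRate (β : ℝ) : Continuous (mixingRate β) :=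
  continuous_iff_continuousAt.2 fun y ↦ (hasDerivAt_mixingRate β y).continuousAt

lemma mul_one_sub_sq_lt_one (hβ : 0 < β) (hm : 0 < m) (hsol : m = tanh (β * m)) :
    β * (1 - m ^ 2) < 1 := by
  have h := mul_one_sub_tanh_sq_lt_tanh (mul_pos hβ hm)
  rw [← hsol, mul_right_comm] at h
  exact (mul_lt_iff_lt_one_left hm).1 h

lemma deriv_mixingRate_eq_zero (hβ : β ≠ 0) (hsol : m = tanh (β * m)) :
    β * m / β - tanh (β * m) = 0 := by
  rw [← hsol, mul_div_cancel_left₀ _ hβ, sub_self]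

lemma exists_mul_sq_le_mixingRate_sub (hβ : 0 < β) (hm : 0 < m) (hsol : m = tanh (β * m)) :
    ∃ c, 0 < c ∧ ∀ y, 0 ≤ y → c * (y - β * m) ^ 2 ≤ mixingRate β y - mixingRate β (β * m) := by
  refine exists_mul_sq_le_sub_of_convexOn_deriv (hasDerivAt_mixingRate β) ?_ (mul_pos hβ hm)
    (by simp) (deriv_mixingRate_eq_zero hβ.ne' hsol) ?_
  · exact ((convexOn_id (convex_Ici 0)).smul (inv_nonneg.2 hβ.le)).sub concaveOn_tanh |>.congr
      fun y _ ↦ by simp [div_eq_inv_mul]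
  · have h := tanh_lt_two_mul_tanh_half (mul_pos hβ hm)
    rw [← hsol] at h
    have hhalf : β * m / 2 / β = m / 2 := by field_simp
    linarith

lemma mixingRate_sub_le_sq (hβ : 1 < β) (hsol : m = tanh (β * m)) (y : ℝ) :
    mixingRate β y - mixingRate β (β * m) ≤ (y - β * m) ^ 2 := by
  have hβ0 : 0 < β := zero_lt_one.trans hβ
  have hderiv2 (y : ℝ) : |1 / β - (1 - tanh y ^ 2)| ≤ 1 * |y - β * m| ^ 0 := by
    have h1 : 1 / β ≤ 1 := (div_le_one hβ0).2 hβ.le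
    rw [pow_zero, mul_one, abs_le]
    constructor <;> linarith [one_div_pos.2 hβ0, sq_nonneg (tanh y), tanh_sq_lt_one y]
  have hderiv1 := abs_le_pow_succ_of_deriv zero_le_one (hasDerivAt_deriv_mixingRate β)
    (deriv_mixingRate_eq_zero hβ0.ne' hsol) hderiv2
  have h := abs_le_pow_succ_of_deriv zero_le_one
    (fun y ↦ (hasDerivAt_mixingRate β y).sub_const _) (sub_self _) hderiv1 y
  rw [one_mul, zero_add, one_add_one_eq_two, sq_abs] at h
  exact (le_abs_self _).trans h

/-- The coefficient `κ` is the one for which `κ (tanh y - m)²` has the curvature of the rate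
function at its minimum; this is what fixes the variance of the Gaussian mixture. -/
lemma exists_abs_mixingRate_sub_sq_tanh_le {κ : ℝ} (hβ : β ≠ 0) (hsol : m = tanh (β * m))
    (hκ : 2 * κ * (1 - m ^ 2) ^ 2 = 1 / β - (1 - m ^ 2)) :
    ∃ C, 0 ≤ C ∧ ∀ y, |mixingRate β y - mixingRate β (β * m) - κ * (tanh y - m) ^ 2|
      ≤ C * |y - β * m| ^ 3 := by
  -- The second derivative is a polynomial in `tanh y` with a zero at `m`; `P` is the quotient.
  let P : ℝ → ℝ := fun T ↦ (T + m) + 2 * κ * ((T + m) * ((1 - T ^ 2) + (1 - m ^ 2))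
    + 2 * T * (1 - T ^ 2))
  obtain ⟨C, hC⟩ := (isCompact_Icc (a := (-1 : ℝ)) (b := 1)).exists_bound_of_continuousOn
    (f := P) (by fun_prop)
  have hC0 : 0 ≤ C := (norm_nonneg _).trans (hC 0 (by norm_num))
  have hd0 (y : ℝ) : HasDerivAt
      (fun y ↦ mixingRate β y - mixingRate β (β * m) - κ * (tanh y - m) ^ 2)
      (y / β - tanh y - 2 * κ * ((tanh y - m) * (1 - tanh y ^ 2))) y := by
    refine (((hasDerivAt_mixingRate β y).sub_const _).sub
      ((((hasDerivAt_tanh y).sub_const m).pow 2).const_mul κ)).congr_deriv ?_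
    rw [Nat.cast_ofNat]
    ring
  have hd1 (y : ℝ) : HasDerivAt
      (fun y ↦ y / β - tanh y - 2 * κ * ((tanh y - m) * (1 - tanh y ^ 2)))
      ((tanh y - m) * P (tanh y)) y := by
    have ht := hasDerivAt_tanh y
    refine ((hasDerivAt_deriv_mixingRate β y).sub
      (((ht.sub_const m).mul ((ht.pow 2).const_sub 1)).const_mul (2 * κ))).congr_deriv ?_
    simp only [P, Nat.cast_ofNat, Pi.pow_apply]
    linear_combination -hκ
  have hbound2 (y : ℝ) : |(tanh y - m) * P (tanh y)| ≤ C * |y - β * m| ^ 1 := by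
    rw [abs_mul, mul_comm, pow_one]
    have hT := abs_tanh_sub_le y (β * m)
    rw [← hsol] at hT
    exact mul_le_mul (hC _ (abs_le.1 (abs_tanh_lt_one y).le)) hT (abs_nonneg _) hC0
  have hbound1 := abs_le_pow_succ_of_deriv hC0 hd1
    (by rw [deriv_mixingRate_eq_zero hβ hsol, ← hsol]; ring) hbound2
  exact ⟨C, hC0, abs_le_pow_succ_of_deriv hC0 hd0 (by rw [← hsol]; ring) hbound1⟩

end MixingRate

/-! ### Relative entropy and approximate domination -/

section RelativeEntropy

variable {Ω : Type*} [Fintype Ω] {ρ η : Ω → ℝ}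

lemma relEnt_nonneg (hρ : ρ ∈ stdSimplex ℝ Ω) (hη : η ∈ stdSimplex ℝ Ω) (hη0 : ∀ x, 0 < η x) :
    0 ≤ relEnt ρ η := by
  have hterm (x : Ω) :
      ρ x * log (ρ x / η x) = η x * InformationTheory.klFun (ρ x / η x) + ρ x - η x := by
    rw [InformationTheory.klFun]
    field_simp [(hη0 x).ne']
    ring
  rw [relEnt, Finset.sum_congr rfl fun x _ ↦ hterm x, Finset.sum_sub_distrib,
    Finset.sum_add_distrib, hρ.2, hη.2, add_sub_cancel_right]
  exact Finset.sum_nonneg fun x _ ↦ mul_nonneg (hη0 x).le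
    (InformationTheory.klFun_nonneg (div_nonneg (hρ.1 x) (hη0 x).le))

lemma mul_log_div_le {p q b c M : ℝ} (hp : 0 ≤ p) (hp1 : p ≤ 1) (hb : 0 ≤ b) (hc : 1 ≤ c)
    (hM : 0 ≤ M) (hq : exp (-M) ≤ q) (hle : p ≤ c * q + b) :
    p * log (p / q) ≤ p * log c + b * (1 + M) := by
  have hc0 : 0 < c := zero_lt_one.trans_le hc
  have hq0 : 0 < q := (exp_pos _).trans_le hq
  rcases hp.eq_or_lt with rfl | hp0
  · simpa using mul_nonneg hb (by linarith)
  have hlog : log (p / q) = log c + log (p / (c * q)) := by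
    rw [← log_mul hc0.ne' (by positivity)]
    field_simp
  rw [hlog, mul_add, add_le_add_iff_left]
  rcases le_total p (c * q) with hsmall | hlarge
  · exact (mul_nonpos_of_nonneg_of_nonpos hp (log_nonpos (by positivity)
      ((div_le_one (by positivity)).2 hsmall))).trans (mul_nonneg hb (by linarith))
  have hlog_le_excess : c * q * log (p / (c * q)) ≤ b := by
    have := log_le_sub_one_of_pos (show 0 < p / (c * q) by positivity)
    rw [le_sub_iff_add_le, le_div_iff₀ (by positivity)] at this
    linarith
  have hlog_le_M : log (p / (c * q)) ≤ M := by
    rw [log_le_iff_le_exp (by positivity), div_le_iff₀ (by positivity)]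
    calc p ≤ exp M * (1 * exp (-M)) := by rwa [one_mul, ← exp_add, add_neg_cancel, exp_zero]
      _ ≤ exp M * (c * q) := by gcongr
  have hlog_nonneg : 0 ≤ log (p / (c * q)) := log_nonneg ((one_le_div (by positivity)).2 hlarge)
  calc p * log (p / (c * q)) ≤ (c * q + b) * log (p / (c * q)) := by gcongr
    _ = c * q * log (p / (c * q)) + b * log (p / (c * q)) := add_mul _ _ _
    _ ≤ b + b * M := add_le_add hlog_le_excess (by gcongr)
    _ = b * (1 + M) := by ring

/-- `ρ` is bounded by `c • η` up to an error of total mass at most `ε`. This one-sided comparison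
of mass functions is what makes the relative entropy of `ρ` with respect to `η` small. -/
def ApproxDominated (c ε : ℝ) (ρ η : Ω → ℝ) : Prop :=
  ∃ b : Ω → ℝ, (∀ x, 0 ≤ b x) ∧ ∑ x, b x ≤ ε ∧ ∀ x, ρ x ≤ c * η x + b x

namespace ApproxDominated

variable {c c' ε M : ℝ}

lemma mono (h : ApproxDominated c ε ρ η) (hcc' : c ≤ c') (hη : ∀ x, 0 ≤ η x) :
    ApproxDominated c' ε ρ η := by
  obtain ⟨b, hb, hbε, hle⟩ := h
  exact ⟨b, hb, hbε, fun x ↦ (hle x).trans (by gcongr; exact hη x)⟩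

lemma one_le_add (h : ApproxDominated c ε ρ η) (hρ : ∑ x, ρ x = 1) (hη : ∑ x, η x = 1) :
    1 ≤ c + ε := by
  obtain ⟨b, -, hbε, hle⟩ := h
  calc 1 = ∑ x, ρ x := hρ.symm
    _ ≤ ∑ x, (c * η x + b x) := Finset.sum_le_sum fun x _ ↦ hle x
    _ = c + ∑ x, b x := by rw [Finset.sum_add_distrib, ← Finset.mul_sum, hη, mul_one]
    _ ≤ c + ε := by gcongr

lemma relEnt_le (h : ApproxDominated c ε ρ η) (hρ : ρ ∈ stdSimplex ℝ Ω) (hc : 1 ≤ c)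
    (hM : 0 ≤ M) (hη : ∀ x, exp (-M) ≤ η x) : relEnt ρ η ≤ log c + ε * (1 + M) := by
  obtain ⟨b, hb, hbε, hle⟩ := h
  have hρ1 (x : Ω) : ρ x ≤ 1 :=
    hρ.2 ▸ Finset.single_le_sum (fun i _ ↦ hρ.1 i) (Finset.mem_univ x)
  calc relEnt ρ η ≤ ∑ x, (ρ x * log c + b x * (1 + M)) := Finset.sum_le_sum fun x _ ↦
        mul_log_div_le (hρ.1 x) (hρ1 x) (hb x) hc hM (hη x) (hle x)
    _ = log c + (∑ x, b x) * (1 + M) := by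
      rw [Finset.sum_add_distrib, ← Finset.sum_mul, ← Finset.sum_mul, hρ.2, one_mul]
    _ ≤ log c + ε * (1 + M) := by gcongr

end ApproxDominated

lemma approxDominated_of_forall_mem_le {X : Type*} [MeasurableSpace X] {μ : Measure X}
    {S : Set X} (hS : MeasurableSet S) {q : X → Ω → ℝ} (hq : ∀ y x, 0 ≤ q y x)
    {w n : X → ℝ} {k ε : ℝ} (hk : 0 ≤ k) (hwn : ∀ y ∈ S, w y ≤ k * n y)
    (hw : ∀ x, IntegrableOn (fun y ↦ w y * q y x) S μ)
    (hn : ∀ x, IntegrableOn (fun y ↦ n y * q y x) S μ) {a b : Ω → ℝ} (ha : ∀ x, 0 ≤ a x)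
    (hb : ∀ x, 0 ≤ b x) (hbε : ∑ x, b x ≤ ε)
    (hρ : ∀ x, ρ x = (∫ y in S, w y * q y x ∂μ) + b x)
    (hη : ∀ x, η x = (∫ y in S, n y * q y x ∂μ) + a x) : ApproxDominated k ε ρ η := by
  refine ⟨b, hb, hbε, fun x ↦ ?_⟩
  rw [hρ, hη]
  gcongr
  calc ∫ y in S, w y * q y x ∂μ ≤ ∫ y in S, k * (n y * q y x) ∂μ :=
        setIntegral_mono_on (hw x) ((hn x).const_mul k) hS fun y hy ↦ by
          rw [← mul_assoc]
          exact mul_le_mul_of_nonneg_right (hwn y hy) (hq y x)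
    _ = k * ∫ y in S, n y * q y x ∂μ := integral_const_mul _ _
    _ ≤ k * ((∫ y in S, n y * q y x ∂μ) + a x) := by
        gcongr
        exact le_add_of_nonneg_right (ha x)

end RelativeEntropy

section Asymptotics

variable {Ω : ℕ → Type*} [∀ N, Fintype (Ω N)] {ρ η : ∀ N, Ω N → ℝ} {M : ℝ}

lemma tendsto_zero_of_tendsto_nat_mul {ε : ℕ → ℝ}
    (hε : Tendsto (fun N : ℕ ↦ N * ε N) atTop (nhds 0)) : Tendsto ε atTop (nhds 0) := by
  refine (hε.div_atTop tendsto_natCast_atTop_atTop).congr' ?_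
  filter_upwards [eventually_ne_atTop 0] with N hN
  exact mul_div_cancel_left₀ _ (Nat.cast_ne_zero.2 hN)

lemma tendsto_relEnt_of_approxDominated {c ε : ℕ → ℝ} (hM : 0 ≤ M)
    (hc : Tendsto c atTop (nhds 1)) (hε : Tendsto (fun N : ℕ ↦ N * ε N) atTop (nhds 0))
    (hρ : ∀ᶠ N in atTop, ρ N ∈ stdSimplex ℝ (Ω N)) (hη : ∀ᶠ N in atTop, η N ∈ stdSimplex ℝ (Ω N))
    (hlow : ∀ᶠ N : ℕ in atTop, ∀ x, exp (-(M * N)) ≤ η N x)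
    (hdom : ∀ᶠ N in atTop, ApproxDominated (c N) (ε N) (ρ N) (η N)) :
    Tendsto (fun N ↦ relEnt (ρ N) (η N)) atTop (nhds 0) := by
  have hlim : Tendsto (fun N : ℕ ↦ log (max (c N) 1) + (ε N + M * (N * ε N))) atTop (nhds 0) := by
    have hlog := (hc.max tendsto_const_nhds).log (ne_of_eq_of_ne (max_self 1) one_ne_zero)
    simpa using hlog.add ((tendsto_zero_of_tendsto_nat_mul hε).add (hε.const_mul M))
  refine tendsto_of_tendsto_of_tendsto_of_le_of_le' tendsto_const_nhds hlim ?_ ?_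
  · filter_upwards [hρ, hη, hlow] with N hρN hηN hlowN
    exact relEnt_nonneg hρN hηN fun x ↦ (exp_pos _).trans_le (hlowN x)
  · filter_upwards [hρ, hη, hlow, hdom] with N hρN hηN hlowN hdomN
    refine ((hdomN.mono (le_max_left _ _) hηN.1).relEnt_le hρN (le_max_right _ _)
      (by positivity) hlowN).trans_eq ?_
    ring

/-- The constants `k` and `k'` need not tend to `1` separately: equality of the total masses
determines the unknown normalisation they carry. -/
lemma tendsto_relEnt_of_mutual_approxDominated {k k' ε ε' : ℕ → ℝ} (hM : 0 ≤ M)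
    (hk : ∀ᶠ N in atTop, 0 ≤ k N) (hkk' : Tendsto (fun N ↦ k N * k' N) atTop (nhds 1))
    (hε : Tendsto (fun N : ℕ ↦ N * ε N) atTop (nhds 0))
    (hε' : Tendsto (fun N : ℕ ↦ N * ε' N) atTop (nhds 0))
    (hρ : ∀ᶠ N in atTop, ρ N ∈ stdSimplex ℝ (Ω N)) (hη : ∀ᶠ N in atTop, η N ∈ stdSimplex ℝ (Ω N))
    (hlow : ∀ᶠ N : ℕ in atTop, ∀ x, exp (-(M * N)) ≤ η N x)
    (hρη : ∀ᶠ N in atTop, ApproxDominated (k N) (ε N) (ρ N) (η N))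
    (hηρ : ∀ᶠ N in atTop, ApproxDominated (k' N) (ε' N) (η N) (ρ N)) :
    Tendsto (fun N ↦ relEnt (ρ N) (η N)) atTop (nhds 0) := by
  have hε'0 := tendsto_zero_of_tendsto_nat_mul hε'
  have hc : Tendsto (fun N ↦ k N * k' N / (1 - ε' N)) atTop (nhds 1) := by
    have h := hkk'.div (tendsto_const_nhds.sub hε'0) (sub_ne_zero.2 one_ne_zero)
    rwa [sub_zero, div_one] at h
  refine tendsto_relEnt_of_approxDominated hM hc hε hρ hη hlow ?_
  filter_upwards [hk, hρ, hη, hρη, hηρ, hε'0.eventually_lt_const one_pos]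
    with N hkN hρN hηN hρηN hηρN hε'N
  refine hρηN.mono ?_ hηN.1
  rw [le_div_iff₀ (sub_pos.2 hε'N)]
  exact mul_le_mul_of_nonneg_left (sub_le_iff_le_add.2 (hηρN.one_le_add hηN.2 hρN.2)) hkN

end Asymptotics

/-! ### Product measures and their symmetrisation -/

/-- The spin `±1` encoded by a Boolean. -/
noncomputable def spinVal (b : Bool) : ℝ := if b then 1 else -1

lemma abs_spinVal (b : Bool) : |spinVal b| = 1 := by cases b <;> simp [spinVal]

section ProductMass

variable {ι : Type*} [Fintype ι]

/-- The mass function on `{±1}^ι` of independent spins of mean `θ`. -/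
noncomputable def productMass (θ : ℝ) (σ : ι → Bool) : ℝ := ∏ i, (1 + spinVal (σ i) * θ) / 2

/-- The even mixture of the product measures of mean spins `θ` and `-θ`. -/
noncomputable def symmProductMass (θ : ℝ) (σ : ι → Bool) : ℝ :=
  (productMass θ σ + productMass (-θ) σ) / 2

lemma continuous_productMass (σ : ι → Bool) : Continuous fun θ ↦ productMass θ σ := by
  unfold productMass
  fun_prop

lemma pow_card_le_productMass {θ q : ℝ} (hq : 0 ≤ q) (hθ : |θ| ≤ 1 - 2 * q) (σ : ι → Bool) :
    q ^ Fintype.card ι ≤ productMass θ σ := by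
  rw [productMass, ← Finset.card_univ, ← Finset.prod_const]
  refine Finset.prod_le_prod (fun _ _ ↦ hq) fun i _ ↦ ?_
  have h : -|θ| ≤ spinVal (σ i) * θ := by
    rw [← one_mul |θ|, ← abs_spinVal (σ i), ← abs_mul]
    exact neg_abs_le _
  linarith

lemma productMass_nonneg {θ : ℝ} (hθ : |θ| ≤ 1) (σ : ι → Bool) : 0 ≤ productMass θ σ :=
  (pow_nonneg le_rfl _).trans (pow_card_le_productMass le_rfl (by simpa using hθ) σ)

lemma sum_productMass [DecidableEq ι] (θ : ℝ) : ∑ σ : ι → Bool, productMass θ σ = 1 := by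
  simp only [productMass]
  rw [← Fintype.prod_sum fun (_ : ι) b ↦ (1 + spinVal b * θ) / 2]
  refine Finset.prod_eq_one fun i _ ↦ ?_
  rw [Fintype.sum_bool, spinVal, spinVal, if_pos rfl, if_neg Bool.false_ne_true]
  ring

lemma productMass_le_one {θ : ℝ} (hθ : |θ| ≤ 1) (σ : ι → Bool) : productMass θ σ ≤ 1 := by
  classical
  exact (Finset.single_le_sum (fun τ _ ↦ productMass_nonneg hθ τ) (Finset.mem_univ σ)).trans_eq
    (sum_productMass θ)

lemma pow_card_le_symmProductMass {θ q : ℝ} (hq : 0 ≤ q) (hθ : |θ| ≤ 1 - 2 * q) (σ : ι → Bool) :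
    q ^ Fintype.card ι ≤ symmProductMass θ σ := by
  have hpos := pow_card_le_productMass hq hθ σ
  have hneg := pow_card_le_productMass (θ := -θ) hq (by rwa [abs_neg]) σ
  rw [symmProductMass]
  linarith

lemma symmProductMass_nonneg {θ : ℝ} (hθ : |θ| ≤ 1) (σ : ι → Bool) : 0 ≤ symmProductMass θ σ :=
  div_nonneg (add_nonneg (productMass_nonneg hθ σ)
    (productMass_nonneg (by rwa [abs_neg]) σ)) zero_le_two

lemma sum_symmProductMass [DecidableEq ι] (θ : ℝ) :
    ∑ σ : ι → Bool, symmProductMass θ σ = 1 := by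
  simp only [symmProductMass]
  rw [← Finset.sum_div, Finset.sum_add_distrib, sum_productMass, sum_productMass,
    one_add_one_eq_two, div_self two_ne_zero]

section Integral

variable {X : Type*} [MeasurableSpace X] {μ : Measure X} {w θ : X → ℝ}

lemma integrable_mul_productMass (hw : Integrable w μ) (hθ : Measurable θ)
    (hθ1 : ∀ y, |θ y| ≤ 1) (σ : ι → Bool) :
    Integrable (fun y ↦ w y * productMass (θ y) σ) μ := by
  refine hw.mul_bdd (c := 1) ((continuous_productMass σ).measurable.comp hθ).aestronglyMeasurable
    (ae_of_all _ fun y ↦ ?_)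
  rw [norm_of_nonneg (productMass_nonneg (hθ1 y) σ)]
  exact productMass_le_one (hθ1 y) σ

lemma integrable_mul_symmProductMass (hw : Integrable w μ) (hθ : Measurable θ)
    (hθ1 : ∀ y, |θ y| ≤ 1) (σ : ι → Bool) :
    Integrable (fun y ↦ w y * symmProductMass (θ y) σ) μ := by
  simp only [symmProductMass, mul_div_assoc', mul_add]
  exact ((integrable_mul_productMass hw hθ hθ1 σ).add
    (integrable_mul_productMass hw hθ.neg (fun y ↦ by simpa using hθ1 y) σ)).div_const 2

lemma sum_integral_mul_symmProductMass [DecidableEq ι] (hw : Integrable w μ) (hθ : Measurable θ)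
    (hθ1 : ∀ y, |θ y| ≤ 1) :
    ∑ σ : ι → Bool, ∫ y, w y * symmProductMass (θ y) σ ∂μ = ∫ y, w y ∂μ := by
  rw [← integral_finsetSum _ fun σ _ ↦ integrable_mul_symmProductMass hw hθ hθ1 σ]
  simp only [← Finset.mul_sum, sum_symmProductMass, mul_one]

end Integral

end ProductMass

/-! ### The Curie–Weiss measure as a mixture -/

section CurieWeiss

variable {β : ℝ} {N : ℕ}

/-- The Boltzmann weight of a configuration in the Curie–Weiss model without external field. -/
noncomputable def curieWeissWeight (β : ℝ) (N : ℕ) (σ : Fin N → Bool) : ℝ :=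
  exp (β / (2 * N) * ∑ i, ∑ j, spinVal (σ i) * spinVal (σ j))

/-- The Curie–Weiss Gibbs measure on `{±1}^N` without external field. -/
noncomputable def curieWeiss (β : ℝ) (N : ℕ) (σ : Fin N → Bool) : ℝ :=
  curieWeissWeight β N σ / ∑ τ, curieWeissWeight β N τ

lemma curieWeissWeight_eq_exp_sq (β : ℝ) (σ : Fin N → Bool) :
    curieWeissWeight β N σ = exp (β / (2 * N) * (∑ i, spinVal (σ i)) ^ 2) := by
  rw [curieWeissWeight, pow_two, Finset.sum_mul_sum]

lemma one_le_curieWeissWeight (hβ : 0 ≤ β) (σ : Fin N → Bool) : 1 ≤ curieWeissWeight β N σ := by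
  rw [curieWeissWeight_eq_exp_sq]
  exact one_le_exp (by positivity)

lemma curieWeissWeight_le (hβ : 0 ≤ β) (σ : Fin N → Bool) :
    curieWeissWeight β N σ ≤ exp (β / 2 * N) := by
  rw [curieWeissWeight_eq_exp_sq, exp_le_exp]
  rcases N.eq_zero_or_pos with rfl | hN
  · simp
  have hS : |∑ i, spinVal (σ i)| ≤ N :=
    (Finset.abs_sum_le_sum_abs _ _).trans_eq (by simp [abs_spinVal])
  calc β / (2 * N) * (∑ i, spinVal (σ i)) ^ 2 ≤ β / (2 * N) * (N : ℝ) ^ 2 :=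
        mul_le_mul_of_nonneg_left (sq_le_sq' (abs_le.1 hS).1 (abs_le.1 hS).2) (by positivity)
    _ = β / 2 * N := by field_simp

lemma sum_curieWeissWeight_pos (β : ℝ) (N : ℕ) : 0 < ∑ σ, curieWeissWeight β N σ :=
  Finset.sum_pos (fun _ _ ↦ exp_pos _) Finset.univ_nonempty

lemma curieWeiss_mem_stdSimplex (β : ℝ) (N : ℕ) :
    curieWeiss β N ∈ stdSimplex ℝ (Fin N → Bool) := by
  refine ⟨fun σ ↦ div_nonneg (exp_pos _).le (sum_curieWeissWeight_pos β N).le, ?_⟩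
  simp only [curieWeiss]
  rw [← Finset.sum_div, div_self (sum_curieWeissWeight_pos β N).ne']

lemma exp_neg_le_curieWeiss (hβ : 0 ≤ β) (σ : Fin N → Bool) :
    exp (-((log 2 + β / 2) * N)) ≤ curieWeiss β N σ := by
  have hZ : ∑ τ, curieWeissWeight β N τ ≤ exp ((log 2 + β / 2) * N) := by
    calc ∑ τ, curieWeissWeight β N τ ≤ ∑ _τ : Fin N → Bool, exp (β / 2 * N) :=
          Finset.sum_le_sum fun τ _ ↦ curieWeissWeight_le hβ τ
      _ = 2 ^ N * exp (β / 2 * N) := by simp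
      _ = exp ((log 2 + β / 2) * N) := by
        rw [add_mul, exp_add, mul_comm (log 2), exp_nat_mul, exp_log two_pos]
  rw [exp_neg, curieWeiss, ← one_div]
  exact div_le_div₀ (exp_pos _).le (one_le_curieWeissWeight hβ σ)
    (sum_curieWeissWeight_pos β N) hZ

lemma cosh_pow_mul_productMass_tanh (y : ℝ) (σ : Fin N → Bool) :
    cosh y ^ N * productMass (tanh y) σ = exp (y * ∑ i, spinVal (σ i)) / 2 ^ N := by
  have hfactor (b : Bool) : cosh y * ((1 + spinVal b * tanh y) / 2) = exp (y * spinVal b) / 2 := by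
    rw [tanh_eq_sinh_div_cosh, mul_div_assoc', mul_add, mul_one, mul_left_comm,
      mul_div_cancel₀ _ (cosh_pos y).ne']
    cases b <;> simp [spinVal, ← cosh_add_sinh]
  rw [Finset.mul_sum, exp_sum, productMass]
  simpa [Finset.prod_mul_distrib, Finset.prod_div_distrib] using
    Finset.prod_congr rfl fun i (_ : i ∈ Finset.univ) ↦ hfactor (σ i)

/-- The unnormalised density of the Hubbard–Stratonovich mixing variable, scaled to equal `1` at
its positive maximiser `β * m`. -/
noncomputable def mixingDensity (β m : ℝ) (N : ℕ) (y : ℝ) : ℝ :=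
  exp (-(N * (mixingRate β y - mixingRate β (β * m))))

lemma mixingDensity_neg (β m : ℝ) (N : ℕ) (y : ℝ) :
    mixingDensity β m N (-y) = mixingDensity β m N y := by
  rw [mixingDensity, mixingRate_neg, mixingDensity]

/-- Completing the square. -/
lemma mixingDensity_mul_productMass_tanh (hβ : β ≠ 0) (hN : N ≠ 0) (m y : ℝ) (σ : Fin N → Bool) :
    mixingDensity β m N y * productMass (tanh y) σ =
      exp (N * mixingRate β (β * m)) / 2 ^ N * curieWeissWeight β N σ *
        exp (-(N / (2 * β)) * (y - β * (∑ i, spinVal (σ i)) / N) ^ 2) := by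
  have hN' : (N : ℝ) ≠ 0 := Nat.cast_ne_zero.2 hN
  have hdensity : mixingDensity β m N y =
      exp (N * mixingRate β (β * m)) * exp (-(N * (y ^ 2 / (2 * β)))) * cosh y ^ N := by
    have hcosh : cosh y ^ N = exp (N * log (cosh y)) := by rw [exp_nat_mul, exp_log (cosh_pos y)]
    rw [hcosh, ← exp_add, ← exp_add, mixingDensity, mixingRate]
    congr 1
    ring
  rw [hdensity, mul_assoc, cosh_pow_mul_productMass_tanh, curieWeissWeight_eq_exp_sq,
    mul_div_assoc', div_mul_eq_mul_div, div_mul_eq_mul_div, ← exp_add, ← exp_add, ← exp_add,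
    ← exp_add]
  congr 2
  field_simp
  ring

lemma integral_eq_integral_Ioi_add_comp_neg {f : ℝ → ℝ} (hf : Integrable f) :
    ∫ y, f y = ∫ y in Set.Ioi 0, (f y + f (-y)) := by
  rw [integral_add hf.integrableOn hf.comp_neg.integrableOn, integral_comp_neg_Ioi, neg_zero,
    add_comm, intervalIntegral.integral_Iic_add_Ioi hf.integrableOn hf.integrableOn]

/-- The Hubbard–Stratonovich transformation. -/
lemma integral_mixingDensity_mul_symmProductMass_tanh (hβ : 0 < β) (hN : N ≠ 0) (m : ℝ)
    (σ : Fin N → Bool) :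
    ∫ y in Set.Ioi 0, mixingDensity β m N y * symmProductMass (tanh y) σ =
      exp (N * mixingRate β (β * m)) / 2 ^ N * √(π / (N / (2 * β))) / 2 *
        curieWeissWeight β N σ := by
  have : (0 : ℝ) < N := Nat.cast_pos.2 (Nat.pos_of_ne_zero hN)
  set S := ∑ i, spinVal (σ i) with hS
  have hGauss : Integrable fun y ↦ exp (-(N / (2 * β)) * (y - β * S / N) ^ 2) :=
    (integrable_exp_neg_mul_sq (by positivity)).comp_sub_right _
  have hprod := fun y ↦ mixingDensity_mul_productMass_tanh hβ.ne' hN m y σ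
  have hfold := integral_eq_integral_Ioi_add_comp_neg
    ((hGauss.const_mul _).congr (ae_of_all _ fun y ↦ (hprod y).symm))
  simp only [mixingDensity_neg, tanh_neg, ← mul_add] at hfold
  simp only [symmProductMass, mul_div_assoc']
  rw [integral_div, ← hfold]
  simp only [hprod, ← hS]
  rw [integral_const_mul,
    integral_sub_right_eq_self (fun y ↦ exp (-(N / (2 * β)) * y ^ 2)), integral_gaussian]
  ring

lemma curieWeiss_eq_integral_div_integral (hβ : 0 < β) (hN : N ≠ 0) {m : ℝ}
    (hint : IntegrableOn (mixingDensity β m N) (Set.Ioi 0)) (σ : Fin N → Bool) :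
    curieWeiss β N σ = (∫ y in Set.Ioi 0, mixingDensity β m N y * symmProductMass (tanh y) σ) /
      ∫ y in Set.Ioi 0, mixingDensity β m N y := by
  have : (0 : ℝ) < N := Nat.cast_pos.2 (Nat.pos_of_ne_zero hN)
  have hHS := integral_mixingDensity_mul_symmProductMass_tanh hβ hN m
  have hsum := sum_integral_mul_symmProductMass (ι := Fin N) hint continuous_tanh.measurable
    fun y ↦ (abs_tanh_lt_one y).le
  simp only [hHS, ← Finset.mul_sum] at hsum
  rw [hHS, ← hsum, mul_div_mul_left _ _ (by positivity), curieWeiss]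

end CurieWeiss

/-! ### Laplace estimates -/

section Laplace

lemma setIntegral_exp_neg_mul_sq_le {b d y₀ : ℝ} (hb : 0 < b) {U : Set ℝ} (hU : MeasurableSet U)
    (hd : ∀ y ∈ U, d ^ 2 ≤ (y - y₀) ^ 2) :
    ∫ y in U, exp (-b * (y - y₀) ^ 2) ≤ exp (-(b / 2) * d ^ 2) * √(π / (b / 2)) := by
  have hint {a : ℝ} (ha : 0 < a) : Integrable fun y ↦ exp (-a * (y - y₀) ^ 2) :=
    (integrable_exp_neg_mul_sq ha).comp_sub_right y₀
  calc ∫ y in U, exp (-b * (y - y₀) ^ 2)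
      ≤ ∫ y in U, exp (-(b / 2) * d ^ 2) * exp (-(b / 2) * (y - y₀) ^ 2) := by
        refine setIntegral_mono_on (hint hb).integrableOn
          ((hint (half_pos hb)).const_mul _).integrableOn hU fun y hy ↦ ?_
        rw [← exp_add, exp_le_exp]
        nlinarith [hd y hy]
    _ = exp (-(b / 2) * d ^ 2) * ∫ y in U, exp (-(b / 2) * (y - y₀) ^ 2) := integral_const_mul _ _
    _ ≤ exp (-(b / 2) * d ^ 2) * ∫ y, exp (-(b / 2) * (y - y₀) ^ 2) :=
        mul_le_mul_of_nonneg_left (setIntegral_le_integral (hint (half_pos hb))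
          (ae_of_all _ fun y ↦ (exp_pos _).le)) (exp_pos _).le
    _ = exp (-(b / 2) * d ^ 2) * √(π / (b / 2)) := by
        rw [integral_sub_right_eq_self fun y ↦ exp (-(b / 2) * y ^ 2), integral_gaussian]

lemma integral_gaussianPDFReal_compl_Icc_le {v : NNReal} (hv : v ≠ 0) {T : ℝ} (hT : 0 ≤ T) :
    ∫ t in (Set.Icc (-T) T)ᶜ, ProbabilityTheory.gaussianPDFReal 0 v t ≤
      √2 * exp (-(1 / (4 * v)) * T ^ 2) := by
  have : (0 : ℝ) < v := NNReal.coe_pos.2 hv.bot_lt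
  have htail := setIntegral_exp_neg_mul_sq_le (b := 1 / (2 * (v : ℝ))) (d := T) (y₀ := 0)
    (by positivity) (measurableSet_Icc (a := -T) (b := T)).compl fun t ht ↦ by
      rw [sub_zero, sq_le_sq, abs_of_nonneg hT]
      exact (not_le.1 fun h ↦ ht (abs_le.1 h)).le
  have hpdf (t : ℝ) : ProbabilityTheory.gaussianPDFReal 0 v t =
      (√(2 * π * v))⁻¹ * exp (-(1 / (2 * (v : ℝ))) * (t - 0) ^ 2) := by
    rw [ProbabilityTheory.gaussianPDFReal]
    congr 2
    ring
  simp only [hpdf, integral_const_mul]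
  calc (√(2 * π * v))⁻¹ * ∫ t in (Set.Icc (-T) T)ᶜ, exp (-(1 / (2 * (v : ℝ))) * (t - 0) ^ 2)
      ≤ (√(2 * π * v))⁻¹ *
          (exp (-(1 / (2 * (v : ℝ)) / 2) * T ^ 2) * √(π / (1 / (2 * (v : ℝ)) / 2))) := by gcongr
    _ = √2 * exp (-(1 / (4 * v)) * T ^ 2) := by
      rw [show π / (1 / (2 * (v : ℝ)) / 2) = 2 * (2 * π * v) by field_simp,
        sqrt_mul zero_le_two, show 1 / (2 * (v : ℝ)) / 2 = 1 / (4 * v) by ring]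
      field_simp

variable {f : ℝ → ℝ} {y₀ c C a : ℝ}

lemma integrableOn_exp_neg_mul (hf : Continuous f) (hc : 0 < c) (ha : 0 < a)
    (hlow : ∀ y, 0 ≤ y → c * (y - y₀) ^ 2 ≤ f y) :
    IntegrableOn (fun y ↦ exp (-(a * f y))) (Set.Ioi 0) := by
  refine Integrable.mono' (((integrable_exp_neg_mul_sq (mul_pos ha hc)).comp_sub_right
    y₀).integrableOn) (by fun_prop) ?_
  filter_upwards [ae_restrict_mem measurableSet_Ioi] with y hy
  rw [norm_of_nonneg (exp_pos _).le, exp_le_exp]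
  have := mul_le_mul_of_nonneg_left (hlow y (le_of_lt hy)) ha.le
  linarith

lemma sqrt_le_integral_exp_neg_mul (hC : 0 < C) (ha : 0 < a) (hy₀ : 0 ≤ y₀)
    (hup : ∀ y, 0 ≤ y → f y ≤ C * (y - y₀) ^ 2)
    (hint : IntegrableOn (fun y ↦ exp (-(a * f y))) (Set.Ioi 0)) :
    √(π / (a * C)) / 2 ≤ ∫ y in Set.Ioi 0, exp (-(a * f y)) := by
  have hsub : Set.Ioi y₀ ⊆ Set.Ioi 0 := Set.Ioi_subset_Ioi hy₀
  calc √(π / (a * C)) / 2 = ∫ y in Set.Ioi y₀, exp (-(a * C) * (y - y₀) ^ 2) := by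
        rw [← integral_gaussian_Ioi,
          ← (measurePreserving_sub_right volume y₀).setIntegral_preimage_emb
            (measurableEmbedding_subRight y₀) fun y ↦ exp (-(a * C) * y ^ 2),
          Set.preimage_sub_const_Ioi, zero_add]
    _ ≤ ∫ y in Set.Ioi y₀, exp (-(a * f y)) := by
        refine setIntegral_mono_on ((integrable_exp_neg_mul_sq
          (mul_pos ha hC)).comp_sub_right y₀).integrableOn (hint.mono_set hsub)
          measurableSet_Ioi fun y hy ↦ ?_
        rw [exp_le_exp]
        have := mul_le_mul_of_nonneg_left (hup y (hsub hy).le) ha.le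
        linarith
    _ ≤ ∫ y in Set.Ioi 0, exp (-(a * f y)) :=
        setIntegral_mono_set hint (ae_of_all _ fun y ↦ (exp_pos _).le) hsub.eventuallyLE

lemma setIntegral_exp_neg_mul_le (hf : Continuous f) (hc : 0 < c) (hC : 0 < C) (ha : 0 < a)
    (hy₀ : 0 ≤ y₀) (hlow : ∀ y, 0 ≤ y → c * (y - y₀) ^ 2 ≤ f y)
    (hup : ∀ y, 0 ≤ y → f y ≤ C * (y - y₀) ^ 2) {U : Set ℝ} {d : ℝ} (hU : MeasurableSet U)
    (hU0 : U ⊆ Set.Ioi 0) (hd : ∀ y ∈ U, d ^ 2 ≤ (y - y₀) ^ 2) :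
    ∫ y in U, exp (-(a * f y)) ≤
      2 * √(2 * C / c) * exp (-(a * c / 2) * d ^ 2) * ∫ y in Set.Ioi 0, exp (-(a * f y)) := by
  have hint := integrableOn_exp_neg_mul hf hc ha hlow
  calc ∫ y in U, exp (-(a * f y)) ≤ ∫ y in U, exp (-(a * c) * (y - y₀) ^ 2) := by
        refine setIntegral_mono_on (hint.mono_set hU0) ((integrable_exp_neg_mul_sq
          (mul_pos ha hc)).comp_sub_right y₀).integrableOn hU fun y hy ↦ ?_
        rw [exp_le_exp]
        have := mul_le_mul_of_nonneg_left (hlow y (hU0 hy).le) ha.le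
        linarith
    _ ≤ exp (-(a * c / 2) * d ^ 2) * √(π / (a * c / 2)) :=
        setIntegral_exp_neg_mul_sq_le (mul_pos ha hc) hU hd
    _ = 2 * √(2 * C / c) * exp (-(a * c / 2) * d ^ 2) * (√(π / (a * C)) / 2) := by
        rw [show π / (a * c / 2) = 2 * C / c * (π / (a * C)) by field_simp,
          sqrt_mul (by positivity)]
        ring
    _ ≤ 2 * √(2 * C / c) * exp (-(a * c / 2) * d ^ 2) * ∫ y in Set.Ioi 0, exp (-(a * f y)) := by
        gcongr
        exact sqrt_le_integral_exp_neg_mul hC ha hy₀ hup hint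

end Laplace

/-! ### The truncated Gaussian mixture -/

section TruncatedMixture

open ProbabilityTheory

variable {v : NNReal} {m T : ℝ} {N : ℕ} {t : ℝ}

/-- The mean spin `m + 2ξ/√N`, where `ξ` is the truncation of `t` at level `T`. -/
noncomputable def truncatedMean (m T : ℝ) (N : ℕ) (t : ℝ) : ℝ :=
  m + 2 * (if |t| ≤ T then t else 0) / √N

/-- The mixture `ν_N` of the product measures of mean spins `±m + 2ξ/√N`, where `ξ` is a centred
Gaussian variable of variance `v` truncated at level `T`. -/
noncomputable def truncatedMixture (v : NNReal) (m T : ℝ) (N : ℕ) (σ : Fin N → Bool) : ℝ :=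
  1 / 2 * ∫ t, (productMass (truncatedMean m T N t) σ + productMass (truncatedMean (-m) T N t) σ) *
    gaussianPDFReal 0 v t

lemma measurable_truncatedMean (m T : ℝ) (N : ℕ) : Measurable (truncatedMean m T N) := by
  have hξ : Measurable fun t : ℝ ↦ if |t| ≤ T then t else 0 :=
    measurable_id.ite (measurableSet_le continuous_abs.measurable measurable_const)
      measurable_const
  exact ((hξ.const_mul 2).div_const _).const_add m

lemma truncatedMean_neg_neg (m T : ℝ) (N : ℕ) (t : ℝ) :
    truncatedMean (-m) T N (-t) = -truncatedMean m T N t := by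
  simp only [truncatedMean, abs_neg]
  split_ifs <;> ring

lemma abs_truncatedMean_le (hT : 0 ≤ T) (m : ℝ) (N : ℕ) (t : ℝ) :
    |truncatedMean m T N t| ≤ |m| + 2 * T / √N := by
  have hξ : |if |t| ≤ T then t else 0| ≤ T := by
    split_ifs with h
    exacts [h, by rwa [abs_zero]]
  refine (abs_add_le _ _).trans ?_
  rw [abs_div, abs_mul, abs_two, abs_of_nonneg (sqrt_nonneg _)]
  gcongr

lemma truncatedMean_of_mem_Icc (ht : t ∈ Set.Icc (-T) T) :
    truncatedMean m T N t = m + 2 * t / √N := by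
  rw [truncatedMean, if_pos (abs_le.2 ht)]

lemma truncatedMean_of_notMem_Icc (ht : t ∉ Set.Icc (-T) T) : truncatedMean m T N t = m := by
  rw [truncatedMean, if_neg fun h ↦ ht (abs_le.1 h), mul_zero, zero_div, add_zero]

lemma integrable_gaussianPDFReal_mul_truncatedMean (hT : 0 ≤ T) (hmT : |m| + 2 * T / √N ≤ 1)
    (σ : Fin N → Bool) :
    Integrable fun t ↦ gaussianPDFReal 0 v t * symmProductMass (truncatedMean m T N t) σ :=
  integrable_mul_symmProductMass (integrable_gaussianPDFReal 0 v) (measurable_truncatedMean m T N)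
    (fun t ↦ (abs_truncatedMean_le hT m N t).trans hmT) σ

lemma truncatedMixture_eq_integral (hT : 0 ≤ T) (hmT : |m| + 2 * T / √N ≤ 1) (σ : Fin N → Bool) :
    truncatedMixture v m T N σ =
      ∫ t, gaussianPDFReal 0 v t * symmProductMass (truncatedMean m T N t) σ := by
  have hint {θ : ℝ → ℝ} (hθ : Measurable θ) (hθ1 : ∀ t, |θ t| ≤ 1) :
      Integrable fun t ↦ gaussianPDFReal 0 v t * productMass (θ t) σ :=
    integrable_mul_productMass (integrable_gaussianPDFReal 0 v) hθ hθ1 σ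
  have hmeas := measurable_truncatedMean m T N
  have hle (t : ℝ) := (abs_truncatedMean_le hT m N t).trans hmT
  have hint_flip : Integrable fun t ↦
      gaussianPDFReal 0 v t * productMass (truncatedMean (-m) T N t) σ :=
    hint (measurable_truncatedMean (-m) T N)
      fun t ↦ (abs_truncatedMean_le hT (-m) N t).trans (by rwa [abs_neg])
  have hint_neg : Integrable fun t ↦
      gaussianPDFReal 0 v t * productMass (-truncatedMean m T N t) σ :=
    hint hmeas.neg fun t ↦ by simpa using hle t
  have hflip : ∫ t, gaussianPDFReal 0 v t * productMass (truncatedMean (-m) T N t) σ =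
      ∫ t, gaussianPDFReal 0 v t * productMass (-truncatedMean m T N t) σ := by
    rw [← integral_neg_eq_self]
    simp only [truncatedMean_neg_neg, gaussianPDFReal, sub_zero, neg_sq]
  simp only [truncatedMixture, symmProductMass, mul_comm _ (gaussianPDFReal 0 v _),
    mul_div_assoc']
  simp only [mul_add]
  rw [integral_add (hint hmeas hle) hint_flip, hflip, ← integral_add (hint hmeas hle) hint_neg,
    integral_div, one_div_mul_eq_div]

lemma pow_le_truncatedMixture (hv : v ≠ 0) (hT : 0 ≤ T) {q : ℝ} (hq : 0 ≤ q)
    (hmT : |m| + 2 * T / √N ≤ 1 - 2 * q) (σ : Fin N → Bool) :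
    q ^ N ≤ truncatedMixture v m T N σ := by
  have hmT1 : |m| + 2 * T / √N ≤ 1 := by linarith
  calc q ^ N = ∫ t, gaussianPDFReal 0 v t * q ^ N := by
        rw [integral_mul_const, integral_gaussianPDFReal_eq_one 0 hv, one_mul]
    _ ≤ ∫ t, gaussianPDFReal 0 v t * symmProductMass (truncatedMean m T N t) σ := by
        refine integral_mono ((integrable_gaussianPDFReal 0 v).mul_const _)
          (integrable_gaussianPDFReal_mul_truncatedMean hT hmT1 σ) fun t ↦
            mul_le_mul_of_nonneg_left ?_ (gaussianPDFReal_nonneg 0 v t)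
        simpa using pow_card_le_symmProductMass hq ((abs_truncatedMean_le hT m N t).trans hmT) σ
    _ = truncatedMixture v m T N σ := (truncatedMixture_eq_integral hT hmT1 σ).symm

lemma truncatedMixture_mem_stdSimplex (hv : v ≠ 0) (hT : 0 ≤ T) (hmT : |m| + 2 * T / √N ≤ 1) :
    truncatedMixture v m T N ∈ stdSimplex ℝ (Fin N → Bool) := by
  refine ⟨fun σ ↦ (pow_nonneg le_rfl N).trans
    (pow_le_truncatedMixture hv hT le_rfl (by simpa using hmT) σ), ?_⟩
  simp only [truncatedMixture_eq_integral hT hmT]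
  rw [sum_integral_mul_symmProductMass (integrable_gaussianPDFReal 0 v)
    (measurable_truncatedMean m T N) fun t ↦ (abs_truncatedMean_le hT m N t).trans hmT,
    integral_gaussianPDFReal_eq_one 0 hv]

lemma truncatedMixture_eq_setIntegral_add (hT : 0 ≤ T) (hmT : |m| + 2 * T / √N ≤ 1)
    (σ : Fin N → Bool) :
    truncatedMixture v m T N σ =
      (∫ t in Set.Icc (-T) T, gaussianPDFReal 0 v t * symmProductMass (m + 2 * t / √N) σ) +
        symmProductMass m σ * ∫ t in (Set.Icc (-T) T)ᶜ, gaussianPDFReal 0 v t := by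
  rw [truncatedMixture_eq_integral hT hmT, ← integral_add_compl
    (measurableSet_Icc (a := -T) (b := T))
    (integrable_gaussianPDFReal_mul_truncatedMean hT hmT σ), ← integral_const_mul]
  congr 1
  · exact setIntegral_congr_fun measurableSet_Icc fun t ht ↦ by
      simp only [truncatedMean_of_mem_Icc ht]
  · exact setIntegral_congr_fun measurableSet_Icc.compl fun t ht ↦ by
      simp only [truncatedMean_of_notMem_Icc ht, mul_comm]

/-- The rescaled deviation `√N (tanh y - m) / 2` of the mean spin `tanh y`: the change of variables
under which the Curie–Weiss mixing variable becomes approximately Gaussian. -/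
noncomputable def fluctuation (m : ℝ) (N : ℕ) (y : ℝ) : ℝ := √N / 2 * (tanh y - m)

/-- The Gaussian density of variance `v`, pulled back along `fluctuation m N`. -/
noncomputable def fluctuationDensity (v : NNReal) (m : ℝ) (N : ℕ) (y : ℝ) : ℝ :=
  √N / 2 * (1 - tanh y ^ 2) * gaussianPDFReal 0 v (fluctuation m N y)

/-- The fields `y` whose fluctuation survives the truncation at level `T`. -/
def fluctuationCore (m T : ℝ) (N : ℕ) : Set ℝ := fluctuation m N ⁻¹' Set.Icc (-T) T

lemma hasDerivAt_fluctuation (m : ℝ) (N : ℕ) (y : ℝ) :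
    HasDerivAt (fluctuation m N) (√N / 2 * (1 - tanh y ^ 2)) y :=
  ((hasDerivAt_tanh y).sub_const m).const_mul _

lemma measurableSet_fluctuationCore (m T : ℝ) (N : ℕ) : MeasurableSet (fluctuationCore m T N) :=
  measurableSet_Icc.preimage ((continuous_iff_continuousAt.2
    fun y ↦ (hasDerivAt_fluctuation m N y).continuousAt).measurable)

lemma abs_deriv_fluctuation (N : ℕ) (y : ℝ) :
    |√N / 2 * (1 - tanh y ^ 2)| = √N / 2 * (1 - tanh y ^ 2) :=
  abs_of_nonneg (mul_nonneg (by positivity) (sub_nonneg.2 (tanh_sq_lt_one y).le))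

lemma fluctuation_injective (m : ℝ) (hN : N ≠ 0) : Function.Injective (fluctuation m N) := by
  have hs : √(N : ℝ) / 2 ≠ 0 := by positivity
  exact (mul_right_injective₀ hs).comp ((sub_left_injective).comp tanh_injective)

lemma mem_fluctuationCore_iff (hN : N ≠ 0) {y : ℝ} :
    y ∈ fluctuationCore m T N ↔ |tanh y - m| ≤ 2 * T / √N := by
  have : (0 : ℝ) < N := Nat.cast_pos.2 (Nat.pos_of_ne_zero hN)
  rw [fluctuationCore, Set.mem_preimage, Set.mem_Icc, ← abs_le, fluctuation, abs_mul,
    abs_of_nonneg (by positivity), le_div_iff₀ (by positivity)]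
  constructor <;> intro h <;> linarith

lemma image_fluctuationCore (hN : N ≠ 0) (hmT : |m| + 2 * T / √N < 1) :
    fluctuation m N '' fluctuationCore m T N = Set.Icc (-T) T := by
  have hs : 0 < √(N : ℝ) := sqrt_pos.2 (Nat.cast_pos.2 (Nat.pos_of_ne_zero hN))
  refine Set.image_preimage_eq_of_subset fun t ht ↦ ?_
  have hθ : |m + 2 * t / √N| < 1 := by
    refine ((abs_add_le _ _).trans ?_).trans_lt hmT
    rw [abs_div, abs_mul, abs_two, abs_of_pos hs]
    gcongr
    exact abs_le.2 ht
  refine ⟨artanh (m + 2 * t / √N), ?_⟩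
  rw [fluctuation, tanh_artanh (abs_lt.1 hθ)]
  field_simp
  ring

lemma integrableOn_fluctuationDensity (v : NNReal) (m T : ℝ) (hN : N ≠ 0) :
    IntegrableOn (fluctuationDensity v m N) (fluctuationCore m T N) := by
  have h := (integrableOn_image_iff_integrableOn_abs_deriv_smul
    (measurableSet_fluctuationCore m T N)
    (fun y _ ↦ (hasDerivAt_fluctuation m N y).hasDerivWithinAt)
    (fluctuation_injective m hN).injOn (gaussianPDFReal 0 v)).1
      (integrable_gaussianPDFReal 0 v).integrableOn
  simp only [abs_deriv_fluctuation, smul_eq_mul] at h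
  exact h

lemma truncatedMixture_eq_fluctuationDensity (hN : N ≠ 0) (hT : 0 ≤ T)
    (hmT : |m| + 2 * T / √N < 1) (σ : Fin N → Bool) :
    truncatedMixture v m T N σ =
      (∫ y in fluctuationCore m T N, fluctuationDensity v m N y * symmProductMass (tanh y) σ) +
        symmProductMass m σ * ∫ t in (Set.Icc (-T) T)ᶜ, gaussianPDFReal 0 v t := by
  have : (0 : ℝ) < N := Nat.cast_pos.2 (Nat.pos_of_ne_zero hN)
  have hmean (y : ℝ) : m + 2 * fluctuation m N y / √N = tanh y := by
    rw [fluctuation]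
    field_simp
    ring
  rw [truncatedMixture_eq_setIntegral_add hT hmT.le, ← image_fluctuationCore hN hmT,
    integral_image_eq_integral_abs_deriv_smul (measurableSet_fluctuationCore m T N)
      (fun y _ ↦ (hasDerivAt_fluctuation m N y).hasDerivWithinAt)
      (fluctuation_injective m hN).injOn]
  simp only [hmean, abs_deriv_fluctuation, smul_eq_mul, fluctuationDensity, mul_assoc]

end TruncatedMixture

/-! ### Comparison of the mixing densities -/

section DensityComparison

variable {β m T c : ℝ} {v : NNReal} {N : ℕ} {y : ℝ}

/-- The factor by which `mixingDensity` exceeds `fluctuationDensity` at their common peak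
`β * m`. -/
noncomputable def mixingScale (v : NNReal) (m : ℝ) (N : ℕ) : ℝ :=
  2 * √(2 * π * v) / (√N * (1 - m ^ 2))

lemma mixingScale_pos (hv : v ≠ 0) (hm : |m| < 1) (hN : N ≠ 0) : 0 < mixingScale v m N := by
  have : (0 : ℝ) < v := NNReal.coe_pos.2 hv.bot_lt
  have := sub_pos.2 ((sq_lt_one_iff_abs_lt_one m).2 hm)
  rw [mixingScale]
  positivity

/-- The logarithm of the ratio of `mixingDensity` to `mixingScale • fluctuationDensity`. -/
noncomputable def logDensityRatio (v : NNReal) (β m : ℝ) (N : ℕ) (y : ℝ) : ℝ :=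
  2 * (log (cosh y) - log (cosh (β * m))) -
    N * (mixingRate β y - mixingRate β (β * m) - 1 / (8 * v) * (tanh y - m) ^ 2)

lemma mixingDensity_eq_mul_fluctuationDensity (hv : v ≠ 0) (hN : N ≠ 0)
    (hsol : m = tanh (β * m)) (y : ℝ) :
    mixingDensity β m N y =
      mixingScale v m N * exp (logDensityRatio v β m N y) * fluctuationDensity v m N y := by
  have : (0 : ℝ) < v := NNReal.coe_pos.2 hv.bot_lt
  have hcosh : exp (2 * (log (cosh y) - log (cosh (β * m)))) = (cosh y / cosh (β * m)) ^ 2 := by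
    rw [← log_div (cosh_pos y).ne' (cosh_pos _).ne', ← Nat.cast_ofNat, exp_nat_mul,
      exp_log (div_pos (cosh_pos y) (cosh_pos _))]
  have hgauss : -(fluctuation m N y - 0) ^ 2 / (2 * v) =
      -(N * (1 / (8 * v) * (tanh y - m) ^ 2)) := by
    rw [fluctuation, sub_zero, mul_pow, div_pow, sq_sqrt (Nat.cast_nonneg N)]
    field_simp
    ring
  have hexp : mixingDensity β m N y =
      exp (-(N * (mixingRate β y - mixingRate β (β * m) - 1 / (8 * v) * (tanh y - m) ^ 2))) *
        exp (-(fluctuation m N y - 0) ^ 2 / (2 * v)) := by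
    rw [hgauss, ← exp_add, mixingDensity]
    congr 1
    ring
  have hm : 1 - m ^ 2 = 1 / cosh (β * m) ^ 2 := by rw [← one_sub_tanh_sq, ← hsol]
  rw [hexp, logDensityRatio, sub_eq_add_neg (2 * _), exp_add, hcosh, fluctuationDensity,
    mixingScale, ProbabilityTheory.gaussianPDFReal, one_sub_tanh_sq, hm]
  have := cosh_pos y
  have := cosh_pos (β * m)
  field_simp

lemma abs_sub_le_of_mem_fluctuationCore (hm : 0 ≤ m) (hsol : m = tanh (β * m)) (hN : N ≠ 0)
    (hT : 2 * T / √N ≤ (1 - m) / 2) (hy : y ∈ fluctuationCore m T N) :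
    |y - β * m| ≤ 2 / (1 - ((1 + m) / 2) ^ 2) * (T / √N) := by
  have hm1 : m < 1 := hsol ▸ tanh_lt_one _
  rw [mem_fluctuationCore_iff hN] at hy
  have htanh : |tanh y| ≤ (1 + m) / 2 := by
    have := abs_sub_abs_le_abs_sub (tanh y) m
    rw [abs_of_nonneg hm] at this
    linarith
  have htanh₀ : |tanh (β * m)| ≤ (1 + m) / 2 := by
    rw [← hsol, abs_of_nonneg hm]
    linarith
  have hslope : 0 < 1 - ((1 + m) / 2) ^ 2 := by nlinarith
  rw [div_mul_eq_mul_div, mul_div_assoc', le_div_iff₀' hslope]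
  refine (mul_abs_sub_le_abs_tanh_sub htanh htanh₀).trans ?_
  rwa [← hsol]

/-- On the core the fields lie within `O(T / √N)` of the peak `β * m`, and the cubic error of the
exponents, multiplied by `N`, dominates. -/
lemma exists_abs_logDensityRatio_le (hβ : β ≠ 0) (hm : 0 ≤ m) (hsol : m = tanh (β * m))
    (hv : 2 * (1 / (8 * (v : ℝ))) * (1 - m ^ 2) ^ 2 = 1 / β - (1 - m ^ 2)) :
    ∃ C, ∀ (N : ℕ) (T : ℝ), N ≠ 0 → 1 ≤ T → 2 * T / √N ≤ (1 - m) / 2 →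
      ∀ y ∈ fluctuationCore m T N, |logDensityRatio v β m N y| ≤ C * (T ^ 3 / √N) := by
  obtain ⟨A, hA, hcubic⟩ := exists_abs_mixingRate_sub_sq_tanh_le hβ hsol hv
  set B := 2 / (1 - ((1 + m) / 2) ^ 2) with hB
  have hB0 : 0 < B := by
    have hm1 : m < 1 := hsol ▸ tanh_lt_one _
    have : 0 < 1 - ((1 + m) / 2) ^ 2 := by nlinarith
    positivity
  refine ⟨2 * B + A * B ^ 3, fun N T hN hT hTN y hy ↦ ?_⟩
  have hN0 : (0 : ℝ) < N := Nat.cast_pos.2 (Nat.pos_of_ne_zero hN)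
  have hdist := abs_sub_le_of_mem_fluctuationCore hm hsol hN hTN hy
  rw [← hB] at hdist
  set F := mixingRate β y - mixingRate β (β * m) - 1 / (8 * v) * (tanh y - m) ^ 2
  calc |logDensityRatio v β m N y|
      ≤ |2 * (log (cosh y) - log (cosh (β * m)))| + |N * F| := abs_sub _ _
    _ = 2 * |log (cosh y) - log (cosh (β * m))| + N * |F| := by
        rw [abs_mul, abs_mul, abs_two, abs_of_pos hN0]
    _ ≤ 2 * |y - β * m| + N * (A * |y - β * m| ^ 3) :=
        add_le_add (mul_le_mul_of_nonneg_left (abs_log_cosh_sub_le _ _) zero_le_two)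
          (mul_le_mul_of_nonneg_left (hcubic y) hN0.le)
    _ ≤ 2 * (B * (T / √N)) + N * (A * (B * (T / √N)) ^ 3) := by gcongr
    _ = 2 * B * (T / √N) + A * B ^ 3 * (T ^ 3 / √N) := by
        have : √(N : ℝ) ^ 2 = N := sq_sqrt hN0.le
        field_simp
        rw [this]
        ring
    _ ≤ 2 * B * (T ^ 3 / √N) + A * B ^ 3 * (T ^ 3 / √N) := by
        gcongr
        exact le_self_pow₀ hT three_ne_zero
    _ = (2 * B + A * B ^ 3) * (T ^ 3 / √N) := (add_mul _ _ _).symm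

end DensityComparison

/-! ### Mutual domination of the two measures -/

section MutualDomination

variable {β m T ε : ℝ} {v : NNReal} {N : ℕ}

lemma integrableOn_mixingDensity (hβ : 0 < β) (hm : 0 < m) (hsol : m = tanh (β * m))
    (hN : N ≠ 0) : IntegrableOn (mixingDensity β m N) (Set.Ioi 0) := by
  obtain ⟨c, hc, hlow⟩ := exists_mul_sq_le_mixingRate_sub hβ hm hsol
  exact integrableOn_exp_neg_mul ((continuous_mixingRate β).sub continuous_const) hc
    (Nat.cast_pos.2 (Nat.pos_of_ne_zero hN)) hlow

lemma integral_mixingDensity_pos (hβ : 1 < β) (hm : 0 < m) (hsol : m = tanh (β * m))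
    (hN : N ≠ 0) : 0 < ∫ y in Set.Ioi 0, mixingDensity β m N y := by
  have hN0 : (0 : ℝ) < N := Nat.cast_pos.2 (Nat.pos_of_ne_zero hN)
  refine lt_of_lt_of_le ?_ (sqrt_le_integral_exp_neg_mul (y₀ := β * m) one_pos hN0 (by positivity)
    (fun y _ ↦ by simpa using mixingRate_sub_le_sq hβ hsol y)
    (integrableOn_mixingDensity (by linarith) hm hsol hN))
  positivity

lemma exists_setIntegral_sdiff_fluctuationCore_le (hβ : 1 < β) (hm : 0 < m)
    (hsol : m = tanh (β * m)) :
    ∃ D c, 0 < c ∧ ∀ (N : ℕ) (T : ℝ), N ≠ 0 → 0 ≤ T →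
      ∫ y in Set.Ioi 0 \ fluctuationCore m T N, mixingDensity β m N y ≤
        D * exp (-(c * T ^ 2)) * ∫ y in Set.Ioi 0, mixingDensity β m N y := by
  obtain ⟨c, hc, hlow⟩ := exists_mul_sq_le_mixingRate_sub (by linarith) hm hsol
  refine ⟨2 * √(2 * 1 / c), 2 * c, by positivity, fun N T hN hT ↦ ?_⟩
  have hN0 : (0 : ℝ) < N := Nat.cast_pos.2 (Nat.pos_of_ne_zero hN)
  have hfar (y : ℝ) (hy : y ∈ Set.Ioi 0 \ fluctuationCore m T N) :
      (2 * T / √N) ^ 2 ≤ (y - β * m) ^ 2 := by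
    have hcore := not_le.1 (mt (mem_fluctuationCore_iff hN).2 hy.2)
    have hlip := abs_tanh_sub_le y (β * m)
    rw [← hsol] at hlip
    rw [sq_le_sq, abs_of_nonneg (by positivity)]
    exact hcore.le.trans hlip
  refine (setIntegral_exp_neg_mul_le ((continuous_mixingRate β).sub continuous_const) hc one_pos
    hN0 (by positivity) hlow (fun y _ ↦ by simpa using mixingRate_sub_le_sq hβ hsol y)
    (measurableSet_Ioi.diff (measurableSet_fluctuationCore m T N)) Set.sdiff_subset
    hfar).trans_eq ?_
  have hexp : -(N * c / 2) * (2 * T / √N) ^ 2 = -(2 * c * T ^ 2) := by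
    rw [div_pow, sq_sqrt hN0.le]
    field_simp
  rw [hexp]
  rfl

lemma fluctuationCore_subset_Ioi (hN : N ≠ 0) (hT : 2 * T / √N < m) :
    fluctuationCore m T N ⊆ Set.Ioi 0 := fun y hy ↦ by
  rw [mem_fluctuationCore_iff hN] at hy
  refine strictMono_tanh.lt_iff_lt.1 ?_
  rw [tanh_zero]
  linarith [(abs_le.1 hy).1]

/-- The ratio of the peaks of the two mixing densities once that of the Curie–Weiss measure is
normalised. -/
noncomputable def peakRatio (v : NNReal) (β m : ℝ) (N : ℕ) : ℝ :=
  mixingScale v m N / ∫ y in Set.Ioi 0, mixingDensity β m N y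

lemma peakRatio_pos (hβ : 1 < β) (hm : 0 < m) (hsol : m = tanh (β * m)) (hv : v ≠ 0)
    (hN : N ≠ 0) : 0 < peakRatio v β m N :=
  div_pos (mixingScale_pos hv (hsol ▸ abs_tanh_lt_one _) hN)
    (integral_mixingDensity_pos hβ hm hsol hN)

lemma mixingDensity_div_integral (hv : v ≠ 0) (hN : N ≠ 0) (hsol : m = tanh (β * m)) (y : ℝ) :
    mixingDensity β m N y / ∫ y in Set.Ioi 0, mixingDensity β m N y =
      peakRatio v β m N * exp (logDensityRatio v β m N y) * fluctuationDensity v m N y := by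
  rw [mixingDensity_eq_mul_fluctuationDensity hv hN hsol, peakRatio]
  ring

lemma fluctuationDensity_nonneg (v : NNReal) (m : ℝ) (N : ℕ) (y : ℝ) :
    0 ≤ fluctuationDensity v m N y :=
  mul_nonneg (mul_nonneg (by positivity) (sub_nonneg.2 (tanh_sq_lt_one y).le))
    (ProbabilityTheory.gaussianPDFReal_nonneg 0 v _)

lemma curieWeiss_eq_setIntegral_add (hβ : 0 < β) (hN : N ≠ 0)
    (hint : IntegrableOn (mixingDensity β m N) (Set.Ioi 0)) {S : Set ℝ} (hS : MeasurableSet S)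
    (hS0 : S ⊆ Set.Ioi 0) (σ : Fin N → Bool) :
    curieWeiss β N σ =
      (∫ y in S, mixingDensity β m N y / (∫ y in Set.Ioi 0, mixingDensity β m N y) *
        symmProductMass (tanh y) σ) +
      ∫ y in Set.Ioi 0 \ S, mixingDensity β m N y / (∫ y in Set.Ioi 0, mixingDensity β m N y) *
        symmProductMass (tanh y) σ := by
  have hmul := integrable_mul_symmProductMass (hint.div_const
    (∫ y in Set.Ioi 0, mixingDensity β m N y)) continuous_tanh.measurable
    (fun y ↦ (abs_tanh_lt_one y).le) σ
  rw [curieWeiss_eq_integral_div_integral hβ hN hint, ← integral_div]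
  simp only [mul_div_right_comm]
  rw [← integral_inter_add_sdiff hS hmul, Set.inter_eq_self_of_subset_right hS0]

section TailMass

/-- The part of the Curie–Weiss measure carried by the fields outside `fluctuationCore m T N`. -/
noncomputable def curieWeissTail (β m T : ℝ) (N : ℕ) (σ : Fin N → Bool) : ℝ :=
  ∫ y in Set.Ioi 0 \ fluctuationCore m T N,
    mixingDensity β m N y / (∫ y in Set.Ioi 0, mixingDensity β m N y) * symmProductMass (tanh y) σ

/-- The part of `truncatedMixture` produced by the truncated values of the Gaussian variable. -/
noncomputable def truncatedMixtureTail (v : NNReal) (m T : ℝ) (N : ℕ) (σ : Fin N → Bool) : ℝ :=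
  symmProductMass m σ * ∫ t in (Set.Icc (-T) T)ᶜ, ProbabilityTheory.gaussianPDFReal 0 v t

lemma curieWeissTail_nonneg (β m T : ℝ) (N : ℕ) (σ : Fin N → Bool) :
    0 ≤ curieWeissTail β m T N σ :=
  integral_nonneg fun y ↦ mul_nonneg
    (div_nonneg (exp_pos _).le (integral_nonneg fun _ ↦ (exp_pos _).le))
    (symmProductMass_nonneg (abs_tanh_lt_one y).le σ)

lemma truncatedMixtureTail_nonneg (hm : |m| ≤ 1) (v : NNReal) (T : ℝ) (σ : Fin N → Bool) :
    0 ≤ truncatedMixtureTail v m T N σ :=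
  mul_nonneg (symmProductMass_nonneg hm σ)
    (integral_nonneg (ProbabilityTheory.gaussianPDFReal_nonneg 0 v))

lemma sum_curieWeissTail (hint : IntegrableOn (mixingDensity β m N) (Set.Ioi 0)) (T : ℝ) :
    ∑ σ, curieWeissTail β m T N σ =
      (∫ y in Set.Ioi 0 \ fluctuationCore m T N, mixingDensity β m N y) /
        ∫ y in Set.Ioi 0, mixingDensity β m N y := by
  simp only [curieWeissTail]
  rw [sum_integral_mul_symmProductMass ((hint.mono_set Set.sdiff_subset).div_const _)
    continuous_tanh.measurable fun y ↦ (abs_tanh_lt_one y).le, integral_div]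

lemma sum_truncatedMixtureTail (v : NNReal) (m T : ℝ) (N : ℕ) :
    ∑ σ, truncatedMixtureTail v m T N σ =
      ∫ t in (Set.Icc (-T) T)ᶜ, ProbabilityTheory.gaussianPDFReal 0 v t := by
  simp only [truncatedMixtureTail]
  rw [← Finset.sum_mul, sum_symmProductMass, one_mul]

end TailMass

lemma approxDominated_curieWeiss_truncatedMixture (hβ : 1 < β) (hm : 0 < m)
    (hsol : m = tanh (β * m)) (hv : v ≠ 0) (hN : N ≠ 0) (hT : 0 ≤ T) (hTm : 2 * T / √N < m)
    (hT1 : |m| + 2 * T / √N < 1)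
    (hε : ∀ y ∈ fluctuationCore m T N, |logDensityRatio v β m N y| ≤ ε) :
    ApproxDominated (peakRatio v β m N * exp ε) (∑ σ, curieWeissTail β m T N σ)
      (curieWeiss β N) (truncatedMixture v m T N) ∧
    ApproxDominated ((peakRatio v β m N)⁻¹ * exp ε) (∑ σ, truncatedMixtureTail v m T N σ)
      (truncatedMixture v m T N) (curieWeiss β N) := by
  have hm1 : |m| < 1 := hsol ▸ abs_tanh_lt_one _
  have hint := integrableOn_mixingDensity (by linarith) hm hsol hN
  have hratio := peakRatio_pos hβ hm hsol hv hN
  have hcore := measurableSet_fluctuationCore m T N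
  have hcore0 := fluctuationCore_subset_Ioi hN hTm
  have hq (y : ℝ) (σ : Fin N → Bool) : 0 ≤ symmProductMass (tanh y) σ :=
    symmProductMass_nonneg (abs_tanh_lt_one y).le σ
  have hmixing := curieWeiss_eq_setIntegral_add (by linarith) hN hint hcore hcore0
  have hgauss := truncatedMixture_eq_fluctuationDensity (v := v) hN hT hT1
  have hmixing_int := integrable_mul_symmProductMass (ι := Fin N)
    ((hint.mono_set hcore0).div_const (∫ y in Set.Ioi 0, mixingDensity β m N y))
    continuous_tanh.measurable fun y ↦ (abs_tanh_lt_one y).le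
  have hgauss_int := integrable_mul_symmProductMass (ι := Fin N)
    (integrableOn_fluctuationDensity v m T hN) continuous_tanh.measurable
    fun y ↦ (abs_tanh_lt_one y).le
  constructor
  · refine approxDominated_of_forall_mem_le hcore hq (by positivity) (fun y hy ↦ ?_)
      hmixing_int hgauss_int (truncatedMixtureTail_nonneg hm1.le v T)
      (curieWeissTail_nonneg β m T N) le_rfl hmixing hgauss
    rw [mixingDensity_div_integral hv hN hsol]
    gcongr
    exacts [fluctuationDensity_nonneg v m N y, (abs_le.1 (hε y hy)).2]
  · refine approxDominated_of_forall_mem_le hcore hq (by positivity) (fun y hy ↦ ?_)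
      hgauss_int hmixing_int (curieWeissTail_nonneg β m T N)
      (truncatedMixtureTail_nonneg hm1.le v T) le_rfl hgauss hmixing
    rw [mixingDensity_div_integral hv hN hsol]
    calc fluctuationDensity v m N y
        ≤ exp (ε + logDensityRatio v β m N y) * fluctuationDensity v m N y :=
          le_mul_of_one_le_left (fluctuationDensity_nonneg v m N y)
            (one_le_exp (by linarith [(abs_le.1 (hε y hy)).1]))
      _ = (peakRatio v β m N)⁻¹ * exp ε * (peakRatio v β m N *
            exp (logDensityRatio v β m N y) * fluctuationDensity v m N y) := by
          rw [exp_add]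
          field_simp

end MutualDomination

/-! ### Asymptotics -/

section Truncation

open Asymptotics

variable {T : ℕ → ℝ}

lemma eventually_one_le_of_log_isLittleO_sq (hT : ∀ᶠ N in atTop, 0 ≤ T N)
    (hlog : (fun N : ℕ ↦ log N) =o[atTop] fun N ↦ T N ^ 2) : ∀ᶠ N in atTop, 1 ≤ T N := by
  filter_upwards [hT, hlog.bound one_pos,
    (tendsto_log_atTop.comp tendsto_natCast_atTop_atTop).eventually_ge_atTop 1] with N hTN hle hge
  rw [Function.comp_apply] at hge
  rw [one_mul, norm_of_nonneg (zero_le_one.trans hge), norm_of_nonneg (sq_nonneg _)] at hle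
  exact (one_le_sq_iff₀ hTN).1 (hge.trans hle)

lemma tendsto_two_mul_div_sqrt (hT : ∀ᶠ N in atTop, 1 ≤ T N)
    (hcube : Tendsto (fun N : ℕ ↦ T N ^ 3 / √N) atTop (nhds 0)) :
    Tendsto (fun N : ℕ ↦ 2 * T N / √N) atTop (nhds 0) := by
  refine tendsto_of_tendsto_of_tendsto_of_le_of_le' tendsto_const_nhds
    (by simpa using hcube.const_mul 2) ?_ ?_
  · filter_upwards [hT] with N hTN
    positivity
  · filter_upwards [hT] with N hTN
    rw [mul_div_assoc]
    gcongr
    exact le_self_pow₀ hTN three_ne_zero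

lemma tendsto_natCast_mul_exp_neg_mul_sq (D : ℝ) {c : ℝ} (hc : 0 < c)
    (hlog : (fun N : ℕ ↦ log N) =o[atTop] fun N ↦ T N ^ 2) :
    Tendsto (fun N : ℕ ↦ N * (D * exp (-(c * T N ^ 2)))) atTop (nhds 0) := by
  suffices h : Tendsto (fun N : ℕ ↦ N * exp (-(c * T N ^ 2))) atTop (nhds 0) by
    simpa [mul_left_comm] using h.const_mul D
  refine squeeze_zero' (Eventually.of_forall fun N ↦ by positivity) ?_
    tendsto_inv_atTop_nhds_zero_nat
  filter_upwards [hlog.bound (half_pos hc), eventually_gt_atTop 0] with N hle hN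
  have hN0 : (0 : ℝ) < N := Nat.cast_pos.2 hN
  rw [norm_of_nonneg (sq_nonneg _)] at hle
  calc N * exp (-(c * T N ^ 2)) = exp (log N - c * T N ^ 2) := by
        rw [sub_eq_add_neg, exp_add, exp_log hN0]
    _ ≤ exp (-log N) := exp_le_exp.2 (by linarith [le_norm_self (log (N : ℝ))])
    _ = (N : ℝ)⁻¹ := by rw [exp_neg, exp_log hN0]

lemma log_isLittleO_rpow_sq {δ : ℝ} (hδ : 0 < δ) :
    (fun N : ℕ ↦ log N) =o[atTop] fun N ↦ ((N : ℝ) ^ δ) ^ 2 := by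
  refine ((isLittleO_log_rpow_atTop (mul_pos hδ two_pos)).comp_tendsto
    tendsto_natCast_atTop_atTop).congr_right fun N ↦ ?_
  exact_mod_cast rpow_mul_natCast N.cast_nonneg δ 2

lemma tendsto_rpow_cube_div_sqrt {δ : ℝ} (hδ : δ < 1 / 6) :
    Tendsto (fun N : ℕ ↦ ((N : ℝ) ^ δ) ^ 3 / √N) atTop (nhds 0) := by
  refine ((tendsto_rpow_neg_atTop (y := 1 / 2 - 3 * δ) (by linarith)).comp
    tendsto_natCast_atTop_atTop).congr' ?_
  filter_upwards [eventually_gt_atTop 0] with N hN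
  rw [Function.comp_apply, ← rpow_mul_natCast N.cast_nonneg, sqrt_eq_rpow,
    ← rpow_sub (Nat.cast_pos.2 hN)]
  congr 1
  push_cast
  ring

end Truncation

section Limit

variable {β m : ℝ} {v : NNReal} {T : ℕ → ℝ}

lemma tendsto_natCast_mul_sum_curieWeissTail (hβ : 1 < β) (hm : 0 < m) (hsol : m = tanh (β * m))
    (hT : ∀ᶠ N in atTop, 0 ≤ T N) (hlog : (fun N : ℕ ↦ log N) =o[atTop] fun N ↦ T N ^ 2) :
    Tendsto (fun N : ℕ ↦ N * ∑ σ, curieWeissTail β m (T N) N σ) atTop (nhds 0) := by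
  obtain ⟨D, c, hc, htail⟩ := exists_setIntegral_sdiff_fluctuationCore_le hβ hm hsol
  refine squeeze_zero' (Eventually.of_forall fun N ↦ mul_nonneg N.cast_nonneg
    (Finset.sum_nonneg fun σ _ ↦ curieWeissTail_nonneg β m (T N) N σ)) ?_
    (tendsto_natCast_mul_exp_neg_mul_sq D hc hlog)
  filter_upwards [hT, eventually_ne_atTop 0] with N hTN hN
  rw [sum_curieWeissTail (integrableOn_mixingDensity (by linarith) hm hsol hN)]
  gcongr
  exact (div_le_iff₀ (integral_mixingDensity_pos hβ hm hsol hN)).2 (htail N (T N) hN hTN)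

lemma tendsto_natCast_mul_sum_truncatedMixtureTail (hm : |m| ≤ 1) (hv : v ≠ 0)
    (hT : ∀ᶠ N in atTop, 0 ≤ T N) (hlog : (fun N : ℕ ↦ log N) =o[atTop] fun N ↦ T N ^ 2) :
    Tendsto (fun N : ℕ ↦ N * ∑ σ, truncatedMixtureTail v m (T N) N σ) atTop (nhds 0) := by
  refine squeeze_zero' (Eventually.of_forall fun N ↦ mul_nonneg N.cast_nonneg
    (Finset.sum_nonneg fun σ _ ↦ truncatedMixtureTail_nonneg hm v (T N) σ)) ?_
    (tendsto_natCast_mul_exp_neg_mul_sq √2 (c := 1 / (4 * v)) (by positivity) hlog)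
  filter_upwards [hT] with N hTN
  rw [sum_truncatedMixtureTail, ← neg_mul]
  gcongr
  exact integral_gaussianPDFReal_compl_Icc_le hv hTN

/-- With this variance the second-order terms at the peaks of the Curie–Weiss mixing density and of
the pulled-back Gaussian density agree. -/
lemma variance_ne_zero_and_curvature_eq (hβ : 0 < β) (hm : 0 < m) (hsol : m = tanh (β * m))
    (hv : (v : ℝ) = β * (1 - m ^ 2) ^ 2 / (4 - 4 * β * (1 - m ^ 2))) :
    v ≠ 0 ∧ 2 * (1 / (8 * (v : ℝ))) * (1 - m ^ 2) ^ 2 = 1 / β - (1 - m ^ 2) := by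
  have hsub : 0 < 1 - m ^ 2 := sub_pos.2 (hsol ▸ tanh_sq_lt_one _)
  have hden : 0 < 4 - 4 * β * (1 - m ^ 2) := by linarith [mul_one_sub_sq_lt_one hβ hm hsol]
  refine ⟨NNReal.coe_ne_zero.1 (by rw [hv]; positivity), ?_⟩
  rw [hv]
  field_simp
  ring

lemma exists_eventually_approxDominated (hβ : 1 < β) (hm : 0 < m) (hsol : m = tanh (β * m))
    (hv : (v : ℝ) = β * (1 - m ^ 2) ^ 2 / (4 - 4 * β * (1 - m ^ 2)))
    (hT : ∀ᶠ N in atTop, 1 ≤ T N) (hwidth : Tendsto (fun N : ℕ ↦ 2 * T N / √N) atTop (nhds 0)) :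
    ∃ C, ∀ᶠ N : ℕ in atTop,
      ApproxDominated (peakRatio v β m N * exp (C * (T N ^ 3 / √N)))
        (∑ σ, curieWeissTail β m (T N) N σ) (curieWeiss β N) (truncatedMixture v m (T N) N) ∧
      ApproxDominated ((peakRatio v β m N)⁻¹ * exp (C * (T N ^ 3 / √N)))
        (∑ σ, truncatedMixtureTail v m (T N) N σ) (truncatedMixture v m (T N) N)
        (curieWeiss β N) := by
  have hm1 : m < 1 := hsol ▸ tanh_lt_one _
  obtain ⟨hv0, hcurv⟩ := variance_ne_zero_and_curvature_eq (by linarith) hm hsol hv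
  obtain ⟨C, hC⟩ := exists_abs_logDensityRatio_le (by linarith) hm.le hsol hcurv
  refine ⟨C, ?_⟩
  filter_upwards [hT, hwidth.eventually_lt_const hm,
    hwidth.eventually_le_const (half_pos (sub_pos.2 hm1)), eventually_ne_atTop 0]
    with N hTN hTm hT1 hN
  exact approxDominated_curieWeiss_truncatedMixture hβ hm hsol hv0 hN (by linarith) hTm
    (by rw [abs_of_pos hm]; linarith) (hC N (T N) hN hTN hT1)

lemma tendsto_mul_exp_mul_inv_mul_exp {r ε : ℕ → ℝ} (hr : ∀ᶠ N in atTop, r N ≠ 0)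
    (hε : Tendsto ε atTop (nhds 0)) :
    Tendsto (fun N ↦ r N * exp (ε N) * ((r N)⁻¹ * exp (ε N))) atTop (nhds 1) := by
  have h := ((hε.add hε).rexp)
  rw [add_zero, exp_zero] at h
  refine h.congr' ?_
  filter_upwards [hr] with N hrN
  rw [exp_add]
  field_simp

lemma eventually_exp_neg_le_truncatedMixture (hm : |m| < 1) (hv : v ≠ 0)
    (hT : ∀ᶠ N in atTop, 0 ≤ T N) (hwidth : Tendsto (fun N : ℕ ↦ 2 * T N / √N) atTop (nhds 0)) :
    ∀ᶠ N : ℕ in atTop, ∀ σ,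
      exp (-(-log ((1 - |m|) / 4) * N)) ≤ truncatedMixture v m (T N) N σ := by
  have hq : 0 < (1 - |m|) / 4 := by linarith
  filter_upwards [hT, hwidth.eventually_le_const (half_pos (sub_pos.2 hm))] with N hTN hTm σ
  rw [neg_mul, neg_neg, mul_comm, exp_nat_mul, exp_log hq]
  exact pow_le_truncatedMixture hv hTN hq.le (by linarith) σ

/-- The truncation level may grow at any rate between `√(log N)` and `N ^ (1 / 6)`. -/
theorem stmt_7_general (hβ : 1 < β) (hm : 0 < m) (hsol : m = tanh (β * m))
    (hv : (v : ℝ) = β * (1 - m ^ 2) ^ 2 / (4 - 4 * β * (1 - m ^ 2)))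
    (hT : ∀ᶠ N in atTop, 0 ≤ T N) (hlog : (fun N : ℕ ↦ log N) =o[atTop] fun N ↦ T N ^ 2)
    (hcube : Tendsto (fun N : ℕ ↦ T N ^ 3 / √N) atTop (nhds 0)) :
    Tendsto (fun N ↦ relEnt (curieWeiss β N) (truncatedMixture v m (T N) N)) atTop (nhds 0) ∧
      Tendsto (fun N ↦ relEnt (truncatedMixture v m (T N) N) (curieWeiss β N)) atTop (nhds 0) := by
  have hβ0 : 0 ≤ β := by linarith
  have hm1 : |m| < 1 := hsol ▸ abs_tanh_lt_one _
  have hv0 : v ≠ 0 := (variance_ne_zero_and_curvature_eq (by linarith) hm hsol hv).1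
  have hT1 := eventually_one_le_of_log_isLittleO_sq hT hlog
  have hwidth := tendsto_two_mul_div_sqrt hT1 hcube
  obtain ⟨C, hdom⟩ := exists_eventually_approxDominated hβ hm hsol hv hT1 hwidth
  have hratio : ∀ᶠ N in atTop, 0 < peakRatio v β m N :=
    (eventually_ne_atTop 0).mono fun N hN ↦ peakRatio_pos hβ hm hsol hv0 hN
  have hconst := tendsto_mul_exp_mul_inv_mul_exp (hratio.mono fun _ ↦ ne_of_gt)
    (by simpa using hcube.const_mul C)
  have hμtail := tendsto_natCast_mul_sum_curieWeissTail hβ hm hsol hT hlog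
  have hνtail := tendsto_natCast_mul_sum_truncatedMixtureTail hm1.le hv0 hT hlog
  have hμ : ∀ᶠ N in atTop, curieWeiss β N ∈ stdSimplex ℝ (Fin N → Bool) :=
    Eventually.of_forall (curieWeiss_mem_stdSimplex β)
  have hν : ∀ᶠ N in atTop, truncatedMixture v m (T N) N ∈ stdSimplex ℝ (Fin N → Bool) := by
    filter_upwards [hT, hwidth.eventually_le_const (sub_pos.2 hm1)] with N hTN hTm
    exact truncatedMixture_mem_stdSimplex hv0 hTN (by linarith)
  constructor
  · exact tendsto_relEnt_of_mutual_approxDominated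
      (neg_nonneg.2 (log_nonpos (by linarith) (by linarith [abs_nonneg m])))
      (hratio.mono fun N hN ↦ by positivity) hconst hμtail hνtail hμ hν
      (eventually_exp_neg_le_truncatedMixture hm1 hv0 hT hwidth)
      (hdom.mono fun N ↦ And.left) (hdom.mono fun N ↦ And.right)
  · exact tendsto_relEnt_of_mutual_approxDominated (M := log 2 + β / 2) (by positivity)
      (hratio.mono fun N hN ↦ by positivity) (by simpa only [mul_comm] using hconst)
      hνtail hμtail hν hμ (Eventually.of_forall fun N ↦ exp_neg_le_curieWeiss hβ0)
      (hdom.mono fun N ↦ And.right) (hdom.mono fun N ↦ And.left)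

end Limit

lemma truncatedMixture_eq_integral_prod (v : NNReal) (m T : ℝ) (N : ℕ) (σ : Fin N → Bool) :
    truncatedMixture v m T N σ = 1 / 2 * ∫ t,
      ((∏ i, ((1 + spinVal (σ i) * m) / 2 + spinVal (σ i) * (if |t| ≤ T then t else 0) / √N)) +
        ∏ i, ((1 - spinVal (σ i) * m) / 2 + spinVal (σ i) * (if |t| ≤ T then t else 0) / √N)) *
          (exp (-t ^ 2 / (2 * v)) / √(2 * π * v)) := by
  have hprod (m t : ℝ) : productMass (truncatedMean m T N t) σ =
      ∏ i, ((1 + spinVal (σ i) * m) / 2 + spinVal (σ i) * (if |t| ≤ T then t else 0) / √N) :=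
    Finset.prod_congr rfl fun i _ ↦ by rw [truncatedMean]; ring
  simp only [truncatedMixture, hprod, mul_neg, ← sub_eq_add_neg,
    ProbabilityTheory.gaussianPDFReal_def, sub_zero, div_eq_inv_mul (exp _)]

/-- For the Curie–Weiss model with `β > 1` and `h = 0`, let
`m⁺ ∈ (0,1)` be the largest solution of `z = tanh(βz)` and
`r² = β(1−(m⁺)²)²/(4−4β(1−(m⁺)²))`. With `ξ̃ ∼ N(0, r²)` truncated at `N^δ`
(`0 < δ < 1/6`) and the two-component mixture `ν_N` below, one has
`H(μ_N|ν_N) → 0` and `H(ν_N|μ_N) → 0`. Spins `±1` are encoded by `Bool`. -/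
theorem stmt_7
    (β : ℝ) (hβ : 1 < β)
    (mp : ℝ) (hmp_mem : mp ∈ Set.Ioo (0 : ℝ) 1)
    (hmp_sol : mp = Real.tanh (β * mp))
    (hmp_largest : ∀ z : ℝ, z = Real.tanh (β * z) → z ≤ mp)
    (r2 : ℝ) (hr2 : r2 = β * (1 - mp ^ 2) ^ 2 / (4 - 4 * β * (1 - mp ^ 2)))
    (δ : ℝ) (hδ0 : 0 < δ) (hδ : δ < 1 / 6)
    (spin : Bool → ℝ) (hspin : ∀ b, spin b = if b then 1 else -1)
    (Z : ℕ → ℝ)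
    (hZ : ∀ N : ℕ, Z N = ∑ σ : Fin N → Bool,
      Real.exp (β / (2 * N) * ∑ i, ∑ j, spin (σ i) * spin (σ j)))
    (μ : ∀ N : ℕ, (Fin N → Bool) → ℝ)
    (hμ : ∀ N σ, μ N σ =
      Real.exp (β / (2 * N) * ∑ i, ∑ j, spin (σ i) * spin (σ j)) / Z N)
    (gauss : ℝ → ℝ)
    (hgauss : ∀ t, gauss t = Real.exp (-t ^ 2 / (2 * r2)) / Real.sqrt (2 * Real.pi * r2))
    (ν : ∀ N : ℕ, (Fin N → Bool) → ℝ)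
    (hν : ∀ N σ, ν N σ = (1 / 2 : ℝ) *
      ∫ t : ℝ,
        ((∏ i, ((1 + spin (σ i) * mp) / 2 +
            spin (σ i) * (if |t| ≤ (N : ℝ) ^ δ then t else 0) / Real.sqrt N)) +
          ∏ i, ((1 - spin (σ i) * mp) / 2 +
            spin (σ i) * (if |t| ≤ (N : ℝ) ^ δ then t else 0) / Real.sqrt N)) * gauss t) :
    Tendsto (fun N => relEnt (μ N) (ν N)) atTop (nhds 0) ∧
      Tendsto (fun N => relEnt (ν N) (μ N)) atTop (nhds 0) := by
  obtain rfl : spin = spinVal := funext hspin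
  obtain rfl : μ = curieWeiss β := by
    funext N σ
    rw [hμ, hZ]
    rfl
  have hsub : 0 < 1 - mp ^ 2 := sub_pos.2 (hmp_sol ▸ tanh_sq_lt_one _)
  have hden : β * (1 - mp ^ 2) < 1 := mul_one_sub_sq_lt_one (by linarith) hmp_mem.1 hmp_sol
  lift r2 to NNReal using hr2 ▸ div_nonneg (by positivity) (by linarith)
  obtain rfl : ν = fun N : ℕ ↦ truncatedMixture r2 mp ((N : ℝ) ^ δ) N := by
    funext N σ
    simp only [hν, hgauss, truncatedMixture_eq_integral_prod]
  exact stmt_7_general hβ hmp_mem.1 hmp_sol hr2 (Eventually.of_forall fun N ↦ by positivity)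
    (log_isLittleO_rpow_sq hδ0) (tendsto_rpow_cube_div_sqrt hδ)
end
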